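/- (Burgess bound combined with the Vinogradov trick.) For every ε > 0 there exists p₀ such that for every prime p ≥ p₀ and every prime q dividing p − 1, there exists an integer n with 1 ≤ n ≤ p^{1/(4√e)+ε} such that the residue of n in (ZMod p)ˣ is not a q-th power. -/

import Mathlib

/-!
Take a character `χ` modulo `p` of order `gcd(q, p - 1)`, so that `q`-th powers lie in its kernel,
and suppose that `χ l = 1` for all primes `l ≤ p ^ a`, where `a > 1 / (4√e)`.

*Vinogradov's trick.* For `N = p ^ (1 / 4 + δ)`, an `n ≤ N` with `χ n ≠ 1` has a prime factor
between `p ^ a` and `N`, so `|∑_{n ≤ N} χ n| ≥ N (1 - 2 ∑ 1 / l)` over the primes `l` in that range.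
By Mertens' estimates `∑ 1 / l` is about `log ((1 / 4 + δ) / a)`, which is less than `1 / 2` for
small `δ`. This contradicts Burgess' bound `∑_{n ≤ N} χ n = o(N)`.

*Burgess' bound.* Replace `n` by `n + a b` with `a` prime and `b < B`: the sum over `n ≤ N` is
controlled by the short sums `∑_{b < B} χ (n / a + b)`, and the points `n / a` with `a ∤ n` are
pairwise distinct modulo `p`. By Hölder's inequality it is enough to bound the `2r`-th moment of
these short sums over all residues, and this is a matter of complete sums `∑_x χ (f x)`.

*Complete sums.* If `χ` has order `d` and `f` has a root of multiplicity coprime to `d`, then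
Stepanov's method bounds the sum by `O(d ^ 2 (deg f) √p)`: an auxiliary polynomial of small degree
vanishes to high order wherever `χ (f x)` takes a given nonzero value.

*Large orders.* The dependence on `d` is harmless since `d` is smaller than any given power of `p`:
the products of `k` distinct primes up to `p ^ (1 / k)` are distinct elements of the kernel of `χ`,
and there are `p ^ (1 - o(1))` of them.
-/

open Finset

section Polynomials

open Polynomial

theorem sum_ne_zero_of_injOn_rootMultiplicity {ι R : Type*} [CommRing R] {s : Finset ι}
    (hs : s.Nonempty) {P : ι → R[X]} {c : R} (hP : ∀ i ∈ s, P i ≠ 0)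
    (hinj : Set.InjOn (fun i ↦ (P i).rootMultiplicity c) s) : ∑ i ∈ s, P i ≠ 0 := by
  classical
  obtain ⟨i₀, hi₀, hmin⟩ := s.exists_min_image (fun i ↦ (P i).rootMultiplicity c) hs
  have hrest : (X - C c) ^ ((P i₀).rootMultiplicity c + 1) ∣ ∑ i ∈ s.erase i₀, P i := by
    refine dvd_sum fun i hi ↦ ?_
    obtain ⟨hne, his⟩ := mem_erase.1 hi
    rw [← le_rootMultiplicity_iff (hP i his)]
    exact (hmin i his).lt_of_ne' fun h ↦ hne (hinj his hi₀ h)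
  intro h
  rw [← add_sum_erase s _ hi₀] at h
  exact pow_rootMultiplicity_not_dvd (hP i₀ hi₀) c
    ((dvd_add_left hrest).1 (h ▸ dvd_zero _))

theorem mul_card_le_natDegree {R : Type*} [CommRing R] [IsDomain R] {f : R[X]} {s : Finset R}
    {M : ℕ} (hs : ∀ x ∈ s, M ≤ f.rootMultiplicity x) : M * #s ≤ f.natDegree := by
  classical
  calc M * #s ≤ ∑ x ∈ s, f.roots.count x := by
        rw [mul_comm, ← smul_eq_mul]
        exact card_nsmul_le_sum _ _ _ fun x hx ↦ (hs x hx).trans_eq (count_roots f).symm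
    _ ≤ f.roots.card := by
        rw [← Multiset.sum_count_eq_card (s := s ∪ f.roots.toFinset) (by simp +contextual)]
        exact sum_le_sum_of_subset subset_union_left
    _ ≤ f.natDegree := card_roots' f

theorem rootMultiplicity_le_natDegree {R : Type*} [CommRing R] [IsDomain R] (f : R[X]) (c : R) :
    f.rootMultiplicity c ≤ f.natDegree := by
  simpa using mul_card_le_natDegree (s := {c}) (by simp : ∀ x ∈ ({c} : Finset R), _)

theorem rootMultiplicity_pow {R : Type*} [CommRing R] [IsDomain R] (f : R[X]) (n : ℕ) (c : R) :
    (f ^ n).rootMultiplicity c = n * f.rootMultiplicity c := by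
  classical
  simp [← count_roots, roots_pow]

theorem rootMultiplicity_prod_X_sub_C_pow {ι R : Type*} [CommRing R] [IsDomain R] [Fintype ι]
    (u : ι → R) (e : ι → ℕ) {i : ι} (hi : ∀ j ≠ i, u j ≠ u i) :
    (∏ j, (X - C (u j)) ^ e j).rootMultiplicity (u i) = e i := by
  classical
  have hrest : ¬ (∏ j ∈ univ.erase i, (X - C (u j)) ^ e j).IsRoot (u i) := by
    rw [IsRoot, eval_prod]
    refine prod_ne_zero_iff.2 fun j hj ↦ ?_
    simpa using pow_ne_zero _ (sub_ne_zero.2 (hi j (ne_of_mem_erase hj)).symm)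
  have hne : ∏ j, (X - C (u j)) ^ e j ≠ 0 :=
    prod_ne_zero_iff.2 fun j _ ↦ pow_ne_zero _ (X_sub_C_ne_zero _)
  rw [← mul_prod_erase univ _ (mem_univ i)] at hne ⊢
  rw [rootMultiplicity_mul hne, rootMultiplicity_X_sub_C_pow, rootMultiplicity_eq_zero hrest,
    add_zero]

theorem iterate_derivative_mul_of_derivative_eq_zero {R : Type*} [CommSemiring R] {u : R[X]}
    (hu : derivative u = 0) (l : ℕ) (h : R[X]) :
    derivative^[l] (u * h) = u * derivative^[l] h := by
  induction l with
  | zero => rfl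
  | succ l ih =>
    rw [Function.iterate_succ_apply', ih, derivative_mul, hu, zero_mul, zero_add,
      Function.iterate_succ_apply']

/-- The linear operator `h ↦ h_l` determined by `(f ^ a * h)^(l) = f ^ (a - l) * h_l`, where `^(l)`
is the `l`-th derivative. It is only meaningful for `l ≤ a`, because of the truncated `a - l`. -/
noncomputable def derivPowMul {R : Type*} [CommSemiring R] (f : R[X]) (a : ℕ) :
    ℕ → R[X] →ₗ[R] R[X]
  | 0 => LinearMap.id
  | l + 1 => LinearMap.mulLeft R f ∘ₗ derivative ∘ₗ derivPowMul f a l +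
      LinearMap.mulLeft R (C ((a - l : ℕ) : R) * derivative f) ∘ₗ derivPowMul f a l

section derivPowMul

variable {R : Type*} [CommSemiring R] (f : R[X])

theorem derivPowMul_succ (a l : ℕ) (h : R[X]) :
    derivPowMul f a (l + 1) h = f * derivative (derivPowMul f a l h) +
      C ((a - l : ℕ) : R) * derivative f * derivPowMul f a l h := rfl

theorem iterate_derivative_pow_mul {a l : ℕ} (hl : l ≤ a) (h : R[X]) :
    derivative^[l] (f ^ a * h) = f ^ (a - l) * derivPowMul f a l h := by
  induction l with
  | zero => rfl
  | succ l ih =>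
    obtain ⟨b, rfl⟩ := Nat.exists_eq_add_of_le hl
    rw [Function.iterate_succ_apply', ih (by lia), derivPowMul_succ, derivative_mul,
      derivative_pow, show l + 1 + b - l = b + 1 by lia, Nat.add_sub_cancel_left,
      Nat.add_sub_cancel]
    ring

theorem natDegree_derivPowMul_le (a l : ℕ) (h : R[X]) :
    (derivPowMul f a l h).natDegree ≤ h.natDegree + l * f.natDegree := by
  induction l with
  | zero => simp [derivPowMul]
  | succ l ih =>
    have hsplit : h.natDegree + (l + 1) * f.natDegree =
        f.natDegree + (h.natDegree + l * f.natDegree) := by ring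
    have hf : (C ((a - l : ℕ) : R) * derivative f).natDegree ≤ f.natDegree :=
      (natDegree_C_mul_le _ _).trans ((natDegree_derivative_le f).trans (Nat.sub_le _ _))
    rw [derivPowMul_succ, hsplit]
    exact natDegree_add_le_of_degree_le
      (natDegree_mul_le_of_le le_rfl
        ((natDegree_derivative_le _).trans ((Nat.sub_le _ _).trans ih)))
      (natDegree_mul_le_of_le hf ih)

end derivPowMul

end Polynomials

section Stepanov

open Polynomial

-- Multiplying `h` by `q` and reducing modulo `p` gives `q * (v - v') ≡ (j - j') * e`, and both
-- sides are too small for a nontrivial congruence.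
theorem eq_and_eq_of_stepanov_exponent_eq {p q G e H j k v j' k' v' : ℕ} (hp : G * q + 1 = p)
    (he : e.Coprime q) (hH : H + e ≤ G) (hj : j < q) (hj' : j' < q) (hv : v < H) (hv' : v' < H)
    (h : j * G * e + p * k + v = j' * G * e + p * k' + v') : j = j' ∧ k = k' := by
  subst p
  have hq : (0 : ℤ) < q := by lia
  have hdvd : (G * q + 1 : ℤ) ∣ q * (v - v') - (j - j') * e :=
    ⟨q * (k' - k) - (j - j') * e, by zify at h; linear_combination (q : ℤ) * h⟩
  have hsmall : |(q * (v - v') - (j - j') * e : ℤ)| < G * q + 1 := by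
    have hvv : |(v - v' : ℤ)| ≤ H := by rw [abs_le]; lia
    have hjj : |(j - j' : ℤ)| ≤ q := by rw [abs_le]; lia
    calc |(q * (v - v') - (j - j') * e : ℤ)| ≤ |(q * (v - v') : ℤ)| + |((j - j') * e : ℤ)| :=
          abs_sub _ _
      _ = q * |(v - v' : ℤ)| + |(j - j' : ℤ)| * e := by simp [abs_mul]
      _ ≤ q * H + q * e := by gcongr
      _ = q * (H + e : ℕ) := by push_cast; ring
      _ ≤ q * G := by gcongr
      _ < G * q + 1 := by lia
  have heq : (q * (v - v') : ℤ) = (j - j') * e :=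
    sub_eq_zero.1 (Int.eq_zero_of_abs_lt_dvd hdvd hsmall)
  have hjdvd : (q : ℤ) ∣ j - j' :=
    (Nat.isCoprime_iff_coprime.2 he.symm).dvd_of_dvd_mul_right ⟨_, heq.symm⟩
  have hjj' : (j : ℤ) = j' :=
    sub_eq_zero.1 (Int.eq_zero_of_abs_lt_dvd hjdvd (by rw [abs_lt]; lia))
  have hvv' : (v : ℤ) = v' := by
    rw [hjj', sub_self, zero_mul] at heq
    exact sub_eq_zero.1 ((mul_eq_zero.1 heq).resolve_left hq.ne')
  obtain rfl : j = j' := by exact_mod_cast hjj'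
  obtain rfl : v = v' := by exact_mod_cast hvv'
  exact ⟨rfl, Nat.eq_of_mul_eq_mul_left (Nat.succ_pos (G * q)) (by lia)⟩

variable {p : ℕ} (f : (ZMod p)[X]) (c : ZMod p) (G M : ℕ) {q K : ℕ}

/-- Stepanov's auxiliary polynomial `∑_{j < q, k < K} (X - c) ^ (p k) f ^ (M + j G) h_{j, k}`, to be
made to vanish to order `M` at every `x` with `f x ≠ 0` and `(f x) ^ G = ζ`. -/
noncomputable def stepanovPoly (h : Fin q × Fin K → (ZMod p)[X]) : (ZMod p)[X] :=
  ∑ i, ((X - C c) ^ p) ^ (i.2 : ℕ) * (f ^ (M + i.1 * G) * h i)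

/-- The `l`-th derivative of `stepanovPoly f c G M h` divided by `f ^ (M - l)`, after `f ^ G` has
been replaced by `ζ` and `(X - c) ^ p` by `X - c`; it is linear in `h` and has small degree. -/
noncomputable def stepanovDeriv (ζ : ZMod p) (l : ℕ) :
    (Fin q × Fin K → (ZMod p)[X]) →ₗ[ZMod p] (ZMod p)[X] :=
  ∑ i, LinearMap.mulLeft _ (C (ζ ^ (i.1 : ℕ)) * (X - C c) ^ (i.2 : ℕ)) ∘ₗ
    derivPowMul f (M + i.1 * G) l ∘ₗ LinearMap.proj i

theorem stepanovDeriv_apply (ζ : ZMod p) (l : ℕ) (h : Fin q × Fin K → (ZMod p)[X]) :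
    stepanovDeriv f c G M ζ l h = ∑ i, C (ζ ^ (i.1 : ℕ)) * (X - C c) ^ (i.2 : ℕ) *
      derivPowMul f (M + i.1 * G) l (h i) := by
  simp only [stepanovDeriv, LinearMap.sum_apply, LinearMap.comp_apply, LinearMap.proj_apply,
    LinearMap.mulLeft_apply]

variable {f c G M} [Fact p.Prime]

theorem eval_iterate_derivative_stepanovPoly {ζ x : ZMod p} (hx : f.eval x ^ G = ζ) {l : ℕ}
    (hl : l ≤ M) (h : Fin q × Fin K → (ZMod p)[X]) :
    (derivative^[l] (stepanovPoly f c G M h)).eval x =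
      f.eval x ^ (M - l) * (stepanovDeriv f c G M ζ l h).eval x := by
  have hder (k : ℕ) : derivative (((X - C c : (ZMod p)[X]) ^ p) ^ k) = 0 := by
    rw [← pow_mul, derivative_pow]
    simp
  rw [stepanovPoly, iterate_derivative_sum, eval_finsetSum, stepanovDeriv_apply, eval_finsetSum,
    mul_sum]
  refine sum_congr rfl fun i _ ↦ ?_
  have hexp : M + i.1 * G - l = (M - l) + G * i.1 := by
    rw [mul_comm, Nat.sub_add_comm hl]
  rw [iterate_derivative_mul_of_derivative_eq_zero (hder i.2),
    iterate_derivative_pow_mul f (hl.trans (Nat.le_add_right _ _)), hexp]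
  simp only [eval_mul, eval_pow, eval_sub, eval_X, eval_C, ZMod.pow_card, pow_add, pow_mul, hx]
  ring

theorem natDegree_stepanovDeriv_lt {ζ : ZMod p} {l H : ℕ} (hH : 0 < H) (hl : l ≤ M)
    {h : Fin q × Fin K → (ZMod p)[X]} (hh : ∀ i, (h i).natDegree < H) :
    (stepanovDeriv f c G M ζ l h).natDegree < H + K + M * f.natDegree := by
  suffices (stepanovDeriv f c G M ζ l h).natDegree ≤ K + (H - 1 + M * f.natDegree) by lia
  rw [stepanovDeriv_apply]
  refine natDegree_sum_le_of_forall_le _ _ fun i _ ↦ natDegree_mul_le_of_le ?_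
    ((natDegree_derivPowMul_le _ _ _ _).trans ?_)
  · refine (natDegree_C_mul_le _ _).trans ?_
    rw [natDegree_pow, natDegree_X_sub_C, mul_one]
    exact i.2.2.le
  · gcongr
    exact Nat.le_sub_one_of_lt (hh i)

theorem exists_ne_zero_forall_stepanovDeriv_eq_zero (f : (ZMod p)[X]) (c ζ : ZMod p) (G : ℕ)
    {H : ℕ} (hdim : M * (H + K + M * f.natDegree) < q * K * H) :
    ∃ h : Fin q × Fin K → (ZMod p)[X], h ≠ 0 ∧ (∀ i, (h i).natDegree < H) ∧
      ∀ l < M, stepanovDeriv f c G M ζ l h = 0 := by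
  have hH : 0 < H := Nat.pos_of_ne_zero (by rintro rfl; simp at hdim)
  set W := H + K + M * f.natDegree
  let Φ : (Fin q × Fin K → degreeLT (ZMod p) H) →ₗ[ZMod p] (Fin M × Fin W → ZMod p) :=
    LinearMap.pi fun lw ↦ lcoeff (ZMod p) lw.2 ∘ₗ stepanovDeriv f c G M ζ lw.1 ∘ₗ
      (degreeLT (ZMod p) H).subtype.compLeft _
  have : FiniteDimensional (ZMod p) (degreeLT (ZMod p) H) :=
    (degreeLTEquiv (ZMod p) H).symm.finiteDimensional
  have hfin : Module.finrank (ZMod p) (Fin M × Fin W → ZMod p) <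
      Module.finrank (ZMod p) (Fin q × Fin K → degreeLT (ZMod p) H) := by
    simpa [Module.finrank_pi_fintype, (degreeLTEquiv (ZMod p) H).finrank_eq] using hdim
  obtain ⟨a, ha, hane⟩ := (Submodule.ne_bot_iff _).1 (LinearMap.ker_ne_bot_of_finrank_lt hfin)
  have hdeg (i) : (a i : (ZMod p)[X]).natDegree < H := by
    by_cases hi : (a i : (ZMod p)[X]) = 0
    · simpa [hi] using hH
    · exact (natDegree_lt_iff_degree_lt hi).2 (mem_degreeLT.1 (a i).2)
  refine ⟨fun i ↦ a i, fun h ↦ hane (funext fun i ↦ Subtype.ext (congrFun h i)), hdeg,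
    fun l hl ↦ Polynomial.ext fun w ↦ ?_⟩
  rcases lt_or_ge w W with hw | hw
  · exact congrFun (show Φ a = 0 from ha) (⟨l, hl⟩, ⟨w, hw⟩)
  · rw [coeff_zero]
    exact coeff_eq_zero_of_natDegree_lt ((natDegree_stepanovDeriv_lt hH hl.le hdeg).trans_le hw)

-- The nonzero summands vanish at `c` to pairwise distinct orders.
theorem stepanovPoly_ne_zero (hp : G * q + 1 = p) (hf : f ≠ 0)
    (hcop : (f.rootMultiplicity c).Coprime q) {H : ℕ} (hH : H + f.natDegree ≤ G)
    {h : Fin q × Fin K → (ZMod p)[X]} (hh : ∀ i, (h i).natDegree < H) (h0 : h ≠ 0) :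
    stepanovPoly f c G M h ≠ 0 := by
  classical
  have hmult (i) (hi : h i ≠ 0) :
      (((X - C c) ^ p) ^ (i.2 : ℕ) * (f ^ (M + i.1 * G) * h i)).rootMultiplicity c =
        i.1 * G * f.rootMultiplicity c + p * i.2 + (h i).rootMultiplicity c +
          M * f.rootMultiplicity c := by
    have hfh := mul_ne_zero (pow_ne_zero (M + i.1 * G) hf) hi
    rw [← pow_mul, rootMultiplicity_mul (mul_ne_zero (pow_ne_zero _ (X_sub_C_ne_zero c)) hfh),
      rootMultiplicity_X_sub_C_pow, rootMultiplicity_mul hfh, rootMultiplicity_pow]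
    ring
  have hsum : stepanovPoly f c G M h =
      ∑ i with h i ≠ 0, ((X - C c) ^ p) ^ (i.2 : ℕ) * (f ^ (M + i.1 * G) * h i) := by
    refine (sum_filter_of_ne fun i _ hi ↦ ?_).symm
    exact right_ne_zero_of_mul (right_ne_zero_of_mul hi)
  obtain ⟨i₀, hi₀⟩ := Function.ne_iff.1 h0
  rw [hsum]
  refine sum_ne_zero_of_injOn_rootMultiplicity (c := c) ⟨i₀, by simpa using hi₀⟩
    (fun i hi ↦ ?_) fun i hi j hj hij ↦ ?_
  · exact mul_ne_zero (pow_ne_zero _ (pow_ne_zero _ (X_sub_C_ne_zero c)))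
      (mul_ne_zero (pow_ne_zero _ hf) (mem_filter.1 hi).2)
  · simp only [coe_filter, mem_univ, true_and, Set.mem_ofPred_eq] at hi hj
    simp only [hmult i hi, hmult j hj, Nat.add_right_cancel_iff] at hij
    have hlt (i) := (rootMultiplicity_le_natDegree (h i) c).trans_lt (hh i)
    obtain ⟨h₁, h₂⟩ := eq_and_eq_of_stepanov_exponent_eq hp hcop
      ((Nat.add_le_add_left (rootMultiplicity_le_natDegree f c) H).trans hH) i.1.2 j.1.2
      (hlt i) (hlt j) hij
    exact Prod.ext (Fin.ext h₁) (Fin.ext h₂)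

theorem natDegree_stepanovPoly_le (hp : G * q + 1 = p) {H : ℕ}
    {h : Fin q × Fin K → (ZMod p)[X]} (hh : ∀ i, (h i).natDegree ≤ H) :
    (stepanovPoly f c G M h).natDegree ≤ p * K + ((M + p) * f.natDegree + H) := by
  refine natDegree_sum_le_of_forall_le _ _ fun i _ ↦
    natDegree_mul_le_of_le ?_ (natDegree_mul_le_of_le ?_ (hh i))
  · rw [← pow_mul, natDegree_pow, natDegree_X_sub_C, mul_one]
    exact Nat.mul_le_mul_left p i.2.2.le
  · rw [natDegree_pow]
    have : i.1 * G ≤ p := by nlinarith [Nat.mul_le_mul_right G i.1.2.le]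
    gcongr

theorem le_rootMultiplicity_of_eval_iterate_derivative_eq_zero {P : (ZMod p)[X]} (hP : P ≠ 0)
    (hM : M ≤ p) {x : ZMod p} (h : ∀ l < M, (derivative^[l] P).eval x = 0) :
    M ≤ P.rootMultiplicity x := by
  rcases Nat.eq_zero_or_pos M with rfl | hM0
  · exact Nat.zero_le _
  have hfact : (((M - 1).factorial : ℕ) : ZMod p) ∈ nonZeroDivisors (ZMod p) := by
    rw [mem_nonZeroDivisors_iff_ne_zero, Ne, ZMod.natCast_eq_zero_iff,
      (Fact.out : p.Prime).dvd_factorial]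
    lia
  exact Nat.le_of_pred_lt
    ((lt_rootMultiplicity_iff_isRoot_iterate_derivative_of_mem_nonZeroDivisors hP hfact).2
      fun l hl ↦ h l (by lia))

/-- The points outside the zeros of `f` at which `f` lies in a given coset of the kernel of the
`G`-th power map. -/
def powFiber (f : (ZMod p)[X]) (G : ℕ) (ζ : ZMod p) : Finset (ZMod p) :=
  {x | f.eval x ≠ 0 ∧ f.eval x ^ G = ζ}

theorem mul_card_powFiber_le (hp : G * q + 1 = p) (hf : f ≠ 0)
    (hcop : (f.rootMultiplicity c).Coprime q) (ζ : ZMod p) {H : ℕ} (hH : H + f.natDegree ≤ G)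
    (hM : M ≤ p) (hdim : M * (H + K + M * f.natDegree) < q * K * H) :
    M * #(powFiber f G ζ) ≤ p * K + ((M + p) * f.natDegree + H) := by
  obtain ⟨h, h0, hdeg, hvan⟩ := exists_ne_zero_forall_stepanovDeriv_eq_zero f c ζ G hdim
  refine (mul_card_le_natDegree (f := stepanovPoly f c G M h) fun x hx ↦ ?_).trans
    (natDegree_stepanovPoly_le hp fun i ↦ (hdeg i).le)
  refine le_rootMultiplicity_of_eval_iterate_derivative_eq_zero
    (stepanovPoly_ne_zero hp hf hcop hH hdeg h0) hM fun l hl ↦ ?_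
  rw [eval_iterate_derivative_stepanovPoly (mem_filter.1 hx).2.2 hl.le, hvan l hl, eval_zero,
    mul_zero]

end Stepanov

section Weil

open Polynomial

theorem stepanov_dimension_lt {p q D G H K m : ℕ} (hq : 1 ≤ q) (hD : 1 ≤ D)
    (hp : G * q + 1 = p) (hH : H + D = G) (hK : K = m + 5 * (q ^ 2 * D)) (hKp : K * K ≤ p)
    (hqD : 2 * (q * D + 1) ≤ p) : q * m * (H + K + q * m * D) < q * K * H := by
  have hqD1 : 1 ≤ q * D := Nat.mul_pos hq hD
  have hqH : p ≤ 2 * (q * H) := by subst hH; lia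
  have hmK : m ≤ K := by lia
  have hkey : m * (K + q * m * D) < 5 * (q ^ 2 * D) * H :=
    calc m * (K + q * m * D) ≤ K * (K + q * K * D) := by gcongr
      _ = (1 + q * D) * (K * K) := by ring
      _ ≤ (q * D + q * D) * p := by gcongr
      _ ≤ (q * D + q * D) * (2 * (q * H)) := by gcongr
      _ = 4 * (q ^ 2 * D) * H := by ring
      _ < 5 * (q ^ 2 * D) * H := by
        have : 0 < H := Nat.pos_of_ne_zero (by rintro rfl; lia)
        gcongr
        lia
  calc q * m * (H + K + q * m * D) = q * (m * H + m * (K + q * m * D)) := by ring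
    _ < q * (m * H + 5 * (q ^ 2 * D) * H) := by gcongr
    _ = q * K * H := by rw [hK]; ring

theorem stepanov_remainder_le {p q D H K m : ℕ} (hq : 2 ≤ q) (hD : 1 ≤ D) (hHp : H ≤ p)
    (hK : K = m + 5 * (q ^ 2 * D)) (hm : 15 * (q ^ 2 * D) ≤ m) (hpK : p < (K + 1) * (K + 1)) :
    p * (5 * (q ^ 2 * D)) + (q * m + p) * D + H ≤ 19 * (q ^ 2 * D) * K * m := by
  have hx : 4 * D ≤ q ^ 2 * D := by gcongr; nlinarith
  have hqD : q * D ≤ q ^ 2 * D := by gcongr; nlinarith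
  have hKm : 3 * K ≤ 4 * m := by lia
  have hp : p ≤ 2 * (K * m) := by nlinarith [hKm]
  generalize q ^ 2 * D = x at *
  have hpD : p * D + H ≤ p * x := by nlinarith
  have hqmD : q * m * D ≤ x * K * m := by
    calc q * m * D = q * D * 1 * m := by ring
      _ ≤ x * K * m := by gcongr; lia
  calc p * (5 * x) + (q * m + p) * D + H = 5 * x * p + (p * D + H) + q * m * D := by ring
    _ ≤ 5 * x * (2 * (K * m)) + 2 * (K * m) * x + x * K * m := by
      gcongr
      exact hpD.trans (by gcongr)
    _ ≤ 19 * x * K * m := by nlinarith [Nat.zero_le (x * K * m)]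

theorem mul_card_powFiber_le_add_sqrt {p q G : ℕ} [Fact p.Prime] (hq : 2 ≤ q)
    (hp : G * q + 1 = p) {f : (ZMod p)[X]} (hf : 1 ≤ f.natDegree) {c : ZMod p}
    (hcop : (f.rootMultiplicity c).Coprime q) (ζ : ZMod p)
    (hbig : 20 * (q ^ 2 * f.natDegree) ≤ p.sqrt) :
    q * #(powFiber f G ζ) ≤ p + 19 * (q ^ 2 * f.natDegree) * p.sqrt := by
  have hf0 : f ≠ 0 := by rintro rfl; simp at hf
  set D := f.natDegree
  set K := p.sqrt
  have hKp : K * K ≤ p := p.sqrt_le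
  have hqD : q * D + 1 ≤ q ^ 2 * D := by
    have h₁ : 1 ≤ q * D := Nat.mul_pos (by lia) hf
    have h₂ : 2 * (q * D) ≤ q ^ 2 * D := by rw [sq, mul_assoc]; gcongr
    lia
  have hpx : 40 * (q ^ 2 * D) ≤ p := by nlinarith
  obtain ⟨m, hm⟩ : ∃ m, K = m + 5 * (q ^ 2 * D) := Nat.exists_eq_add_of_le' (by lia)
  obtain ⟨H, hH⟩ : ∃ H, H + D = G := by
    have : q * D ≤ q * G := by lia
    exact ⟨G - D, Nat.sub_add_cancel (Nat.le_of_mul_le_mul_left this (by lia))⟩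
  have hHp : H ≤ p := by nlinarith
  have hMp : q * m ≤ p := by nlinarith
  have hstep := mul_card_powFiber_le hp hf0 hcop ζ hH.le hMp
    (stepanov_dimension_lt (by lia) hf hp hH hm hKp (by lia))
  have hrem := stepanov_remainder_le hq hf hHp hm (by lia) p.lt_succ_sqrt
  refine Nat.le_of_mul_le_mul_left ?_ (show 0 < m by lia)
  calc m * (q * #(powFiber f G ζ)) = q * m * #(powFiber f G ζ) := by ring
    _ ≤ p * K + ((q * m + p) * D + H) := hstep
    _ = m * p + (p * (5 * (q ^ 2 * D)) + (q * m + p) * D + H) := by rw [hm]; ring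
    _ ≤ m * p + 19 * (q ^ 2 * D) * K * m := by gcongr
    _ = m * (p + 19 * (q ^ 2 * D) * K) := by ring

theorem sum_nthRootsFinset_one_eq_zero {R : Type*} [CommRing R] [IsDomain R] {q : ℕ} (hq : 1 < q)
    {ω : R} (hω : IsPrimitiveRoot ω q) : ∑ z ∈ nthRootsFinset q (1 : R), z = 0 := by
  classical
  calc ∑ z ∈ nthRootsFinset q (1 : R), z = (nthRoots q (1 : R)).sum := by
        rw [nthRootsFinset_def, sum_eq_multiset_sum, Multiset.map_id', Multiset.toFinset_val,
          hω.nthRoots_one_nodup.dedup]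
    _ = ∑ i ∈ range q, ω ^ i := by
        simp only [hω.nthRoots_eq (one_pow q), mul_one]
        rfl
    _ = 0 := hω.geom_sum_eq_zero hq

-- The `q`-th roots of unity sum to zero, so `∑ φ = -∑ z, (E - #φ⁻¹(z)) z`.
theorem norm_sum_le_of_card_fiber_le {α : Type*} {s : Finset α} {φ : α → ℂ} {q E : ℕ}
    (hq : 1 < q) (hφ : ∀ x ∈ s, φ x ^ q = 1)
    (hE : ∀ a ∈ s, #{x ∈ s | φ x = φ a} ≤ E) : ‖∑ x ∈ s, φ x‖ ≤ q * E - #s := by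
  classical
  have hprim := Complex.isPrimitiveRoot_exp q (by lia)
  set Z := Polynomial.nthRootsFinset q (1 : ℂ)
  have hmem {z : ℂ} : z ∈ Z ↔ z ^ q = 1 := Polynomial.mem_nthRootsFinset (by lia) 1
  have hmaps : ∀ x ∈ s, φ x ∈ Z := fun x hx ↦ hmem.2 (hφ x hx)
  have hfib (z : ℂ) : #{x ∈ s | φ x = z} ≤ E := by
    rcases {x ∈ s | φ x = z}.eq_empty_or_nonempty with h | ⟨a, ha⟩
    · simp [h]
    · obtain ⟨has, rfl⟩ := mem_filter.1 ha
      exact hE a has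
  have hsum : ∑ x ∈ s, φ x = -∑ z ∈ Z, ((E - #{x ∈ s | φ x = z} : ℝ) : ℂ) * z := by
    rw [← sum_fiberwise_of_maps_to hmaps]
    have hZ : ∑ z ∈ Z, ((E : ℝ) : ℂ) * z = 0 := by
      rw [← mul_sum, sum_nthRootsFinset_one_eq_zero hq hprim, mul_zero]
    simp only [Complex.ofReal_sub, sub_mul, sum_sub_distrib, hZ, zero_sub, neg_neg]
    refine sum_congr rfl fun z _ ↦ ?_
    rw [sum_congr rfl (g := fun _ ↦ z) fun x hx ↦ (mem_filter.1 hx).2]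
    simp
  rw [hsum, norm_neg]
  calc ‖∑ z ∈ Z, ((E - #{x ∈ s | φ x = z} : ℝ) : ℂ) * z‖
      ≤ ∑ z ∈ Z, ((E : ℝ) - #{x ∈ s | φ x = z}) := by
        refine norm_sum_le_of_le _ fun z hz ↦ ?_
        have hle : (0 : ℝ) ≤ E - #{x ∈ s | φ x = z} := by simpa using hfib z
        rw [norm_mul, Complex.norm_of_nonneg hle,
          Complex.norm_eq_one_of_pow_eq_one (hmem.1 hz) (by lia), mul_one]
    _ = q * E - #s := by
        rw [sum_sub_distrib, card_eq_sum_card_fiberwise hmaps, sum_const,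
          hprim.card_nthRootsFinset]
        simp

theorem pow_eq_pow_of_mulChar_apply_eq {F R : Type*} [Field F] [Fintype F] [CommRing R]
    {χ : MulChar F R} {G : ℕ} (hG : G * orderOf χ + 1 = Fintype.card F) {a b : F} (ha : a ≠ 0)
    (hb : b ≠ 0) (h : χ a = χ b) : a ^ G = b ^ G := by
  obtain ⟨γ, hγ⟩ := IsCyclic.exists_generator (α := Fˣ)
  obtain ⟨n, hn⟩ := mem_powers_iff_mem_zpowers.2 (hγ (Units.mk0 a ha / Units.mk0 b hb))
  have hab : a = ((γ ^ n : Fˣ) : F) * b := by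
    have := congrArg (fun u : Fˣ ↦ (u : F)) hn
    simp only [Units.val_div_eq_div_val, Units.val_mk0] at this
    rw [this, div_mul_cancel₀ _ hb]
  have hχn : χ ^ n = 1 := by
    rw [MulChar.eq_iff hγ, MulChar.pow_apply_coe, MulChar.one_apply_coe, ← map_pow,
      ← Units.val_pow_eq_pow_val]
    rw [hab, map_mul] at h
    exact ((IsUnit.mk0 b hb).map χ).mul_eq_right.1 h
  obtain ⟨k, rfl⟩ := orderOf_dvd_of_pow_eq_one hχn
  have hcard : γ ^ (G * orderOf χ) = 1 := by
    classical
    rw [← Nat.add_sub_cancel (n := G * orderOf χ) (m := 1), hG, ← Fintype.card_units,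
      pow_card_eq_one]
  have hone : (γ ^ (orderOf χ * k)) ^ G = 1 := by
    rw [← pow_mul, show orderOf χ * k * G = G * orderOf χ * k by ring, pow_mul, hcard, one_pow]
  rw [hab, mul_pow, ← Units.val_pow_eq_pow_val, hone, Units.val_one, one_mul]

theorem card_sub_natDegree_le_card_filter_eval_ne_zero {R : Type*} [CommRing R] [IsDomain R]
    [Fintype R] [DecidableEq R] {f : R[X]} (hf : f ≠ 0) :
    Fintype.card R ≤ #{x | f.eval x ≠ 0} + f.natDegree := by
  have hroots : #{x | ¬ f.eval x ≠ 0} ≤ f.natDegree := by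
    refine (card_le_card fun x hx ↦ ?_).trans
      ((Multiset.toFinset_card_le _).trans (card_roots' f))
    simpa [hf] using hx
  rw [← card_univ, ← card_filter_add_card_filter_not (fun x ↦ f.eval x ≠ 0)]
  gcongr

variable {p : ℕ} [Fact p.Prime] {χ : MulChar (ZMod p) ℂ}

theorem orderOf_mulChar_mul_add_one : (p - 1) / orderOf χ * orderOf χ + 1 = p := by
  have hdvd := χ.orderOf_dvd_card_sub_one
  rw [ZMod.card] at hdvd
  rw [Nat.div_mul_cancel hdvd, Nat.sub_add_cancel (Fact.out : p.Prime).one_lt.le]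

theorem norm_sum_mulChar_eval_le_of_le_sqrt {f : (ZMod p)[X]} {c : ZMod p}
    (hχ : 1 < orderOf χ) (hf : 1 ≤ f.natDegree)
    (hcop : (f.rootMultiplicity c).Coprime (orderOf χ))
    (hbig : 20 * (orderOf χ ^ 2 * f.natDegree) ≤ p.sqrt) :
    ‖∑ x, χ (f.eval x)‖ ≤ 19 * (orderOf χ ^ 2 * f.natDegree) * p.sqrt + f.natDegree := by
  classical
  have hp := orderOf_mulChar_mul_add_one (χ := χ)
  set q := orderOf χ
  set E := (p + 19 * (q ^ 2 * f.natDegree) * p.sqrt) / q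
  set A : Finset (ZMod p) := {x | f.eval x ≠ 0}
  have hA {x} : x ∈ A ↔ f.eval x ≠ 0 := by simp [A]
  have hpow : ∀ x ∈ A, χ (f.eval x) ^ q = 1 := fun x hx ↦ by
    rw [← MulChar.pow_apply' χ (by lia), pow_orderOf_eq_one, MulChar.one_apply (hA.1 hx).isUnit]
  have hfib : ∀ a ∈ A, #{x ∈ A | χ (f.eval x) = χ (f.eval a)} ≤ E := fun a ha ↦ by
    refine (card_le_card (t := powFiber f ((p - 1) / q) (f.eval a ^ ((p - 1) / q)))
      fun x hx ↦ ?_).trans ?_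
    · obtain ⟨hx, hχx⟩ := mem_filter.1 hx
      exact mem_filter.2 ⟨mem_univ x, hA.1 hx, pow_eq_pow_of_mulChar_apply_eq
        (by rwa [ZMod.card]) (hA.1 hx) (hA.1 ha) hχx⟩
    · rw [Nat.le_div_iff_mul_le (by lia), mul_comm]
      exact mul_card_powFiber_le_add_sqrt hχ hp hf hcop _ hbig
  have hcard : (p : ℝ) ≤ #A + f.natDegree := by
    exact_mod_cast ZMod.card p ▸
      card_sub_natDegree_le_card_filter_eval_ne_zero (by rintro rfl; simp at hf)
  have hE : (q : ℝ) * E ≤ p + 19 * (q ^ 2 * f.natDegree) * p.sqrt := by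
    exact_mod_cast Nat.mul_div_le _ q
  have hsum : ∑ x, χ (f.eval x) = ∑ x ∈ A, χ (f.eval x) := by
    refine (sum_filter_of_ne fun x _ hx ↦ ?_).symm
    contrapose! hx
    rw [hx, MulChar.map_zero]
  rw [hsum]
  linarith [norm_sum_le_of_card_fiber_le hχ hpow hfib]

theorem norm_sum_mulChar_eval_le {f : (ZMod p)[X]} {c : ZMod p} (hχ : 1 < orderOf χ)
    (hcop : (f.rootMultiplicity c).Coprime (orderOf χ)) :
    ‖∑ x, χ (f.eval x)‖ ≤ 20 * (orderOf χ : ℝ) ^ 2 * f.natDegree * √p := by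
  have hD : 1 ≤ f.natDegree := Nat.pos_of_ne_zero fun h0 ↦ by
    have hmult := rootMultiplicity_le_natDegree f c
    rw [h0, Nat.le_zero] at hmult
    rw [hmult, Nat.coprime_zero_left] at hcop
    lia
  have hp1 : (1 : ℝ) ≤ p := by exact_mod_cast (Fact.out : p.Prime).one_lt.le
  have hq : (1 : ℝ) ≤ orderOf χ := by exact_mod_cast hχ.le
  rcases le_or_gt (20 * (orderOf χ ^ 2 * f.natDegree)) p.sqrt with hbig | hsmall
  · calc ‖∑ x, χ (f.eval x)‖
        ≤ 19 * (orderOf χ ^ 2 * f.natDegree) * p.sqrt + f.natDegree :=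
          norm_sum_mulChar_eval_le_of_le_sqrt hχ hD hcop hbig
      _ ≤ 19 * (orderOf χ ^ 2 * f.natDegree) * √p + orderOf χ ^ 2 * f.natDegree * √p := by
          gcongr
          · exact Real.nat_sqrt_le_real_sqrt
          · rw [mul_right_comm]
            exact le_mul_of_one_le_left (by positivity)
              (one_le_mul_of_one_le_of_one_le (one_le_pow₀ hq) (Real.one_le_sqrt.2 hp1))
      _ = 20 * (orderOf χ : ℝ) ^ 2 * f.natDegree * √p := by ring
  · have hsqrt : √p ≤ 20 * (orderOf χ : ℝ) ^ 2 * f.natDegree := by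
      rw [Nat.sqrt_lt'] at hsmall
      refine Real.sqrt_le_left (by positivity) |>.2 ?_
      exact_mod_cast (mul_assoc 20 (orderOf χ ^ 2) f.natDegree ▸ hsmall).le
    calc ‖∑ x, χ (f.eval x)‖ ≤ ∑ _x : ZMod p, (1 : ℝ) :=
          norm_sum_le_of_le _ fun x _ ↦ DirichletCharacter.norm_le_one χ _
      _ = √p * √p := by simp
      _ ≤ 20 * (orderOf χ : ℝ) ^ 2 * f.natDegree * √p := by gcongr

theorem norm_sum_mulChar_prod_le {ι : Type*} [Fintype ι] (hχ : 1 < orderOf χ) (u : ι → ZMod p)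
    (e : ι → ℕ) {i : ι} (hi : ∀ j ≠ i, u j ≠ u i) (hcop : (e i).Coprime (orderOf χ)) :
    ‖∑ x, χ (∏ j, (x + u j) ^ e j)‖ ≤ 20 * (orderOf χ : ℝ) ^ 2 * (∑ j, e j : ℕ) * √p := by
  set f : (ZMod p)[X] := ∏ j, (X - C (-u j)) ^ e j
  have hmult : f.rootMultiplicity (-u i) = e i :=
    rootMultiplicity_prod_X_sub_C_pow _ e fun j hj ↦ neg_injective.ne (hi j hj)
  have hdeg : f.natDegree = ∑ j, e j := by
    rw [natDegree_prod_of_monic _ _ fun j _ ↦ (monic_X_sub_C _).pow _]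
    simp
  have hbound := norm_sum_mulChar_eval_le hχ (hmult.symm ▸ hcop)
  simpa only [f, eval_prod, eval_pow, eval_sub, eval_X, eval_C, sub_neg_eq_add, hdeg] using hbound

end Weil

section Moment

theorem star_mulChar_apply_eq_pow {F : Type*} [Field F] [Finite F] {χ : MulChar F ℂ}
    (hχ : 1 < orderOf χ) (a : F) : star (χ a) = χ a ^ (orderOf χ - 1) := by
  have hinv : χ ^ (orderOf χ - 1) * χ = 1 := by
    rw [← pow_succ, Nat.sub_add_cancel (by lia), pow_orderOf_eq_one]
  rw [MulChar.star_apply', ← MulChar.pow_apply' χ (by lia), eq_inv_of_mul_eq_one_left hinv]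

theorem card_image_le_of_forall_exists_ne {ι α : Type*} [Fintype ι] [DecidableEq α] {r : ℕ}
    (hι : Fintype.card ι ≤ 2 * r) {t : ι → α} (ht : ∀ i, ∃ j ≠ i, t j = t i) :
    #(univ.image t) ≤ r := by
  classical
  have hfib : ∀ a ∈ univ.image t, 2 ≤ #{i | t i = a} := by
    simp only [mem_image, mem_univ, true_and, forall_exists_index, forall_apply_eq_imp_iff]
    intro i
    obtain ⟨j, hji, hj⟩ := ht i
    rw [← card_pair hji.symm]
    exact card_le_card (by simp [insert_subset_iff, hj])
  have hcard := mul_card_image_le_card (f := t) (s := univ) 2 hfib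
  rw [card_univ] at hcard
  lia

-- Such a `t` takes at most `r` values, so it factors through `Fin r`.
theorem card_filter_forall_exists_ne_le {ι α : Type*} [Fintype ι] [DecidableEq ι] [Nonempty ι]
    [DecidableEq α] (s : Finset α) {r : ℕ} (hι : Fintype.card ι ≤ 2 * r) :
    #{t ∈ Fintype.piFinset fun _ : ι ↦ s | ∀ i, ∃ j ≠ i, t j = t i} ≤
      r ^ Fintype.card ι * #s ^ r := by
  have hcard : #((univ : Finset (ι → Fin r)) ×ˢ Fintype.piFinset fun _ : Fin r ↦ s) =
      r ^ Fintype.card ι * #s ^ r := by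
    simp
  rw [← hcard]
  refine (card_le_card fun t ht ↦ ?_).trans (card_image_le (f := fun uw ↦ uw.2 ∘ uw.1))
  obtain ⟨hts, ht⟩ := mem_filter.1 ht
  rw [Fintype.mem_piFinset] at hts
  obtain ⟨e⟩ : Nonempty (univ.image t ↪ Fin r) := Function.Embedding.nonempty_of_card_le (by
    simpa using card_image_le_of_forall_exists_ne hι ht)
  let u (i : ι) : Fin r := e ⟨t i, mem_image_of_mem t (mem_univ i)⟩
  let w : Fin r → α := Function.extend e Subtype.val fun _ ↦ t (Classical.arbitrary ι)
  refine mem_image.2 ⟨(u, w), mem_product.2 ⟨mem_univ u, Fintype.mem_piFinset.2 fun k ↦ ?_⟩,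
    funext fun i ↦ by simp only [u, w, Function.comp_apply, e.injective.extend_apply]⟩
  by_cases hk : ∃ a, e a = k
  · obtain ⟨⟨a, ha⟩, rfl⟩ := hk
    obtain ⟨i, -, rfl⟩ := mem_image.1 ha
    simpa only [w, e.injective.extend_apply] using hts i
  · simpa only [w, Function.extend_apply' _ _ _ hk] using hts _

/-- The exponents in `‖z‖ ^ (2 r) = ∏ z ^ e`, for `z` a sum of values of a character of order `d`:
complex conjugation is the `(d - 1)`-st power on such values. -/
def momentExponent (d r : ℕ) : Fin r ⊕ Fin r → ℕ := Sum.elim (fun _ ↦ 1) fun _ ↦ d - 1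

theorem momentExponent_coprime {d : ℕ} (hd : 0 < d) (r : ℕ) (i : Fin r ⊕ Fin r) :
    (momentExponent d r i).Coprime d := by
  obtain ⟨m, rfl⟩ := Nat.exists_eq_add_of_le' hd
  rcases i with i | i <;> simp [momentExponent]

theorem sum_momentExponent {d : ℕ} (hd : 0 < d) (r : ℕ) :
    ∑ i, momentExponent d r i = r * d := by
  obtain ⟨m, rfl⟩ := Nat.exists_eq_add_of_le' hd
  simp [momentExponent]
  ring

variable {p : ℕ} [Fact p.Prime] {χ : MulChar (ZMod p) ℂ}

theorem norm_sum_mulChar_pow_eq (hχ : 1 < orderOf χ) (s : Finset (ZMod p)) (r : ℕ) (x : ZMod p) :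
    ((‖∑ b ∈ s, χ (x + b)‖ ^ (2 * r) : ℝ) : ℂ) =
      ∑ t ∈ Fintype.piFinset fun _ ↦ s,
        χ (∏ i, (x + t i) ^ momentExponent (orderOf χ) r i) := by
  have hstar : star (∑ b ∈ s, χ (x + b)) = ∑ b ∈ s, χ (x + b) ^ (orderOf χ - 1) := by
    rw [star_sum]
    exact sum_congr rfl fun b _ ↦ star_mulChar_apply_eq_pow hχ _
  calc ((‖∑ b ∈ s, χ (x + b)‖ ^ (2 * r) : ℝ) : ℂ)
      = (∑ b ∈ s, χ (x + b)) ^ r * star (∑ b ∈ s, χ (x + b)) ^ r := by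
        rw [← mul_pow, Complex.star_def, Complex.mul_conj', pow_mul]
        push_cast
        rfl
    _ = ∏ i : Fin r ⊕ Fin r, ∑ b ∈ s, χ (x + b) ^ momentExponent (orderOf χ) r i := by
        rw [hstar, Fintype.prod_sum_type]
        simp [momentExponent]
    _ = _ := by
        rw [prod_univ_sum]
        simp only [map_prod, map_pow]

theorem sum_norm_sum_mulChar_pow_le (hχ : 1 < orderOf χ) {r : ℕ} (hr : 0 < r)
    (s : Finset (ZMod p)) :
    ∑ x, ‖∑ b ∈ s, χ (x + b)‖ ^ (2 * r) ≤
      r ^ (2 * r) * #s ^ r * p + #s ^ (2 * r) * (20 * r * (orderOf χ) ^ 3 * √p) := by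
  classical
  have : Nonempty (Fin r ⊕ Fin r) := ⟨Sum.inl ⟨0, hr⟩⟩
  set T := Fintype.piFinset fun _ : Fin r ⊕ Fin r ↦ s
  set S : (Fin r ⊕ Fin r → ZMod p) → ℂ :=
    fun t ↦ ∑ x, χ (∏ i, (x + t i) ^ momentExponent (orderOf χ) r i)
  have hexp : ((∑ x, ‖∑ b ∈ s, χ (x + b)‖ ^ (2 * r) : ℝ) : ℂ) = ∑ t ∈ T, S t := by
    rw [Complex.ofReal_sum, sum_comm]
    exact sum_congr rfl fun x _ ↦ norm_sum_mulChar_pow_eq hχ s r x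
  have htriv (t) : ‖S t‖ ≤ p :=
    (norm_sum_le_of_le _ fun x _ ↦ DirichletCharacter.norm_le_one χ _).trans_eq (by simp)
  have hweil (t) (ht : ¬ ∀ i, ∃ j ≠ i, t j = t i) : ‖S t‖ ≤ 20 * r * (orderOf χ) ^ 3 * √p := by
    push Not at ht
    obtain ⟨i, hi⟩ := ht
    refine (norm_sum_mulChar_prod_le hχ t _ hi (momentExponent_coprime (by lia) r i)).trans_eq ?_
    rw [sum_momentExponent (by lia)]
    push_cast
    ring
  have hbad : (#{t ∈ T | ∀ i, ∃ j ≠ i, t j = t i} : ℝ) ≤ r ^ (2 * r) * #s ^ r := by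
    exact_mod_cast (card_filter_forall_exists_ne_le s (r := r) (by simp [two_mul])).trans_eq
      (by simp [two_mul])
  have hgood : (#{t ∈ T | ¬ ∀ i, ∃ j ≠ i, t j = t i} : ℝ) ≤ #s ^ (2 * r) := by
    exact_mod_cast (card_filter_le _ _).trans_eq (by simp [T, two_mul])
  calc ∑ x, ‖∑ b ∈ s, χ (x + b)‖ ^ (2 * r) = ‖∑ t ∈ T, S t‖ := by
        rw [← hexp, Complex.norm_of_nonneg (by positivity)]
    _ ≤ ∑ t ∈ T, ‖S t‖ := norm_sum_le _ _
    _ ≤ #{t ∈ T | ∀ i, ∃ j ≠ i, t j = t i} * (p : ℝ) +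
        #{t ∈ T | ¬ ∀ i, ∃ j ≠ i, t j = t i} * (20 * r * (orderOf χ) ^ 3 * √p) := by
        rw [← sum_filter_add_sum_filter_not T (fun t ↦ ∀ i, ∃ j ≠ i, t j = t i)]
        simp only [← nsmul_eq_mul]
        gcongr
        · exact sum_le_card_nsmul _ _ _ fun t _ ↦ htriv t
        · exact sum_le_card_nsmul _ _ _ fun t ht ↦ hweil t (mem_filter.1 ht).2
    _ ≤ _ := by gcongr

end Moment

section Burgess

theorem norm_sum_Ioc_sub_sum_Ioc_add_le {E : Type*} [SeminormedAddCommGroup E] {g : ℕ → E} {C : ℝ}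
    (hg : ∀ n, ‖g n‖ ≤ C) (N k : ℕ) :
    ‖∑ n ∈ Ioc 0 N, g n - ∑ n ∈ Ioc 0 N, g (n + k)‖ ≤ 2 * k * C := by
  have hshift : ∑ n ∈ Ioc 0 N, g (n + k) = ∑ n ∈ Ioc k (N + k), g n := by
    simpa using (sum_map (Ioc 0 N) (addRightEmbedding k) g).symm
  have hsplit : ∑ n ∈ Ioc 0 N, g n + ∑ n ∈ Ioc N (N + k), g n =
      ∑ n ∈ Ioc 0 k, g n + ∑ n ∈ Ioc k (N + k), g n := by
    rw [sum_Ioc_consecutive _ N.zero_le (N.le_add_right k),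
      sum_Ioc_consecutive _ k.zero_le (k.le_add_left N)]
  have hnorm (a : ℕ) : ‖∑ n ∈ Ioc a (a + k), g n‖ ≤ k * C :=
    (norm_sum_le_of_le _ fun n _ ↦ hg n).trans_eq (by simp)
  calc ‖∑ n ∈ Ioc 0 N, g n - ∑ n ∈ Ioc 0 N, g (n + k)‖
      = ‖∑ n ∈ Ioc 0 (0 + k), g n - ∑ n ∈ Ioc N (N + k), g n‖ := by
        rw [hshift, zero_add, sub_eq_sub_iff_add_eq_add.2 hsplit]
    _ ≤ k * C + k * C := (norm_sub_le _ _).trans (add_le_add (hnorm 0) (hnorm N))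
    _ = 2 * k * C := by ring

theorem sum_comp_pow_le_of_injOn {α β : Type*} [Fintype β] {s : Finset α} {g : α → β}
    (hg : Set.InjOn g s) {T : β → ℝ} (hT : ∀ x, 0 ≤ T x) (n : ℕ) :
    (∑ i ∈ s, T (g i)) ^ (n + 1) ≤ #s ^ n * ∑ x, T x ^ (n + 1) := by
  classical
  rcases s.eq_empty_or_nonempty with rfl | hs
  · simpa using mul_nonneg (by positivity) (sum_nonneg fun x _ ↦ pow_nonneg (hT x) (n + 1))
  calc (∑ i ∈ s, T (g i)) ^ (n + 1) ≤ #s ^ n * ∑ i ∈ s, T (g i) ^ (n + 1) := by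
        rw [← div_le_iff₀' (by positivity)]
        exact pow_sum_div_card_le_sum_pow (fun i _ ↦ hT _) n
    _ ≤ #s ^ n * ∑ x, T x ^ (n + 1) := by
        rw [← sum_image (f := fun x ↦ T x ^ (n + 1)) hg]
        gcongr
        · exact fun x _ _ ↦ pow_nonneg (hT x) _
        · exact subset_univ _

theorem card_filter_dvd_le {P : Finset ℕ} {A₀ : ℕ} (hA₀ : 0 < A₀) (hP : ∀ a ∈ P, A₀ ≤ a)
    (N : ℕ) : (#{an ∈ P ×ˢ Ioc 0 N | an.1 ∣ an.2} : ℝ) ≤ #P * (N / A₀) := by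
  have hcard : #{an ∈ P ×ˢ Ioc 0 N | an.1 ∣ an.2} = ∑ a ∈ P, N / a := by
    rw [card_filter, sum_product]
    simp only [← card_filter, Nat.Ioc_filter_dvd_card_eq_div]
  rw [hcard, ← nsmul_eq_mul]
  push_cast
  refine sum_le_card_nsmul _ _ _ fun a ha ↦ Nat.cast_div_le.trans ?_
  have := hP a ha
  gcongr

variable {p : ℕ} [Fact p.Prime]

theorem injOn_cast_div_cast {P : Finset ℕ} {A N : ℕ} (hP : ∀ a ∈ P, a.Prime ∧ a ≤ A)
    (hAN : A * N < p) :
    Set.InjOn (fun an : ℕ × ℕ ↦ (an.2 / an.1 : ZMod p))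
      ({an ∈ P ×ˢ Ioc 0 N | ¬ an.1 ∣ an.2} : Finset (ℕ × ℕ)) := by
  have hlt {a n : ℕ} (ha : a ∈ P) (hn : n ∈ Ioc 0 N) : n * a < p :=
    (Nat.mul_le_mul (mem_Ioc.1 hn).2 (hP a ha).2).trans_lt (by rwa [mul_comm])
  have hne {a n : ℕ} (ha : a ∈ P) (hn : n ∈ Ioc 0 N) : (a : ZMod p) ≠ 0 := by
    rw [Ne, ZMod.natCast_eq_zero_iff]
    refine Nat.not_dvd_of_pos_of_lt (hP a ha).1.pos ((Nat.le_mul_of_pos_left a ?_).trans_lt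
      (hlt ha hn))
    exact (mem_Ioc.1 hn).1
  rintro ⟨a, n⟩ han ⟨b, m⟩ hbm h
  simp only [coe_filter, mem_product, Set.mem_ofPred_eq] at han hbm
  obtain ⟨⟨ha, hn⟩, hdvd⟩ := han
  obtain ⟨⟨hb, hm⟩, -⟩ := hbm
  have hmod : ((n * b : ℕ) : ZMod p) = (m * a : ℕ) := by
    push_cast
    exact (div_eq_div_iff (hne ha hn) (hne hb hm)).1 h
  rw [ZMod.natCast_eq_natCast_iff] at hmod
  have heq : n * b = m * a := Nat.ModEq.eq_of_lt_of_lt hmod (hlt hb hn) (hlt ha hm)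
  obtain rfl : a = b := (Nat.prime_dvd_prime_iff_eq (hP a ha).1 (hP b hb).1).1
    (((hP a ha).1.dvd_mul.1 (Dvd.intro_left m heq.symm)).resolve_left hdvd)
  rw [Nat.eq_of_mul_eq_mul_right (hP a ha).1.pos heq]

/-- The absolute value of the character sum over the interval `x, x + 1, …, x + B - 1`. -/
noncomputable def shortSum (χ : MulChar (ZMod p) ℂ) (B : ℕ) (x : ZMod p) : ℝ :=
  ‖∑ b ∈ range B, χ (x + b)‖

variable {χ : MulChar (ZMod p) ℂ}

theorem shortSum_nonneg (B : ℕ) (x : ZMod p) : 0 ≤ shortSum χ B x := norm_nonneg _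

theorem shortSum_le (B : ℕ) (x : ZMod p) : shortSum χ B x ≤ B :=
  (norm_sum_le_of_le _ fun _ _ ↦ DirichletCharacter.norm_le_one χ _).trans_eq (by simp)

theorem sum_shortSum_pow_le (hχ : 1 < orderOf χ) {r B : ℕ} (hr : 0 < r) (hB : B ≤ p)
    (hpB : √p ≤ B ^ r) :
    ∑ x, shortSum χ B x ^ (2 * r) ≤
      (r ^ (2 * r) + 20 * r * orderOf χ ^ 3) * √p * B ^ (2 * r) := by
  classical
  have hinj : Set.InjOn (Nat.cast : ℕ → ZMod p) (range B) := by
    intro b hb c hc h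
    simp only [coe_range, Set.mem_Iio] at hb hc
    exact Nat.ModEq.eq_of_lt_of_lt ((ZMod.natCast_eq_natCast_iff _ _ _).1 h) (by lia) (by lia)
  have hmoment := sum_norm_sum_mulChar_pow_le hχ hr ((range B).image (Nat.cast : ℕ → ZMod p))
  simp only [sum_image hinj, card_image_of_injOn hinj, card_range] at hmoment
  calc ∑ x, shortSum χ B x ^ (2 * r)
      ≤ r ^ (2 * r) * B ^ r * p + B ^ (2 * r) * (20 * r * orderOf χ ^ 3 * √p) := hmoment
    _ = r ^ (2 * r) * B ^ r * √p * √p + B ^ (2 * r) * (20 * r * orderOf χ ^ 3 * √p) := by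
        rw [mul_assoc _ √p, Real.mul_self_sqrt (by positivity)]
    _ ≤ r ^ (2 * r) * B ^ r * B ^ r * √p + B ^ (2 * r) * (20 * r * orderOf χ ^ 3 * √p) := by
        gcongr
    _ = (r ^ (2 * r) + 20 * r * orderOf χ ^ 3) * √p * B ^ (2 * r) := by ring

theorem norm_sum_mulChar_shift_le {a : ℕ} (ha : (a : ZMod p) ≠ 0) (B N : ℕ) :
    ‖∑ b ∈ range B, ∑ n ∈ Ioc 0 N, χ (n + (a * b : ℕ))‖ ≤
      ∑ n ∈ Ioc 0 N, shortSum χ B (n / a) := by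
  rw [sum_comm]
  refine norm_sum_le_of_le _ fun n _ ↦ ?_
  have hfactor (b : ℕ) : χ (n + (a * b : ℕ)) = χ a * χ (n / a + b) := by
    rw [← map_mul, Nat.cast_mul, mul_add, mul_div_cancel₀ _ ha]
  simp only [hfactor, ← mul_sum, norm_mul]
  exact mul_le_of_le_one_left (norm_nonneg _) (DirichletCharacter.norm_le_one χ _)

theorem mul_norm_sum_mulChar_le {a : ℕ} (ha : (a : ZMod p) ≠ 0) (B N : ℕ) :
    B * ‖∑ n ∈ Ioc 0 N, χ n‖ ≤
      ∑ n ∈ Ioc 0 N, shortSum χ B (n / a) + B * (2 * (a * B)) := by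
  set S := ∑ n ∈ Ioc 0 N, χ n
  have hshift (b) (hb : b ∈ range B) : ‖S - ∑ n ∈ Ioc 0 N, χ (n + (a * b : ℕ))‖ ≤ 2 * (a * B) := by
    have h := norm_sum_Ioc_sub_sum_Ioc_add_le (g := fun n ↦ χ n)
      (fun n ↦ DirichletCharacter.norm_le_one χ n) N (a * b)
    simp only [Nat.cast_add] at h
    refine h.trans ?_
    have hbB : b ≤ B := (mem_range.1 hb).le
    push_cast
    rw [mul_one]
    gcongr
  calc B * ‖S‖ = ‖∑ b ∈ range B, ∑ n ∈ Ioc 0 N, χ (n + (a * b : ℕ)) +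
        ∑ b ∈ range B, (S - ∑ n ∈ Ioc 0 N, χ (n + (a * b : ℕ)))‖ := by
        rw [← sum_add_distrib]
        simp
    _ ≤ _ := (norm_add_le _ _).trans (add_le_add (norm_sum_mulChar_shift_le ha B N)
        ((norm_sum_le_of_le _ hshift).trans_eq (by simp)))

theorem sum_shortSum_dvd_le {P : Finset ℕ} {A₀ : ℕ} (hA₀ : 0 < A₀) (hP : ∀ a ∈ P, A₀ ≤ a)
    (B N : ℕ) :
    ∑ an ∈ P ×ˢ Ioc 0 N with an.1 ∣ an.2, shortSum χ B (an.2 / an.1) ≤ #P * (N / A₀) * B := by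
  refine (sum_le_card_nsmul _ _ (B : ℝ) fun an _ ↦ shortSum_le B _).trans ?_
  rw [nsmul_eq_mul]
  gcongr
  exact card_filter_dvd_le hA₀ hP N

theorem sum_shortSum_not_dvd_le (hχ : 1 < orderOf χ) {r A B N : ℕ} {P : Finset ℕ} {η : ℝ}
    (hr : 0 < r) (hη : 0 ≤ η) (hB : B ≤ p) (hpB : √p ≤ B ^ r) (hAN : A * N < p)
    (hP : ∀ a ∈ P, a.Prime ∧ a ≤ A)
    (hη' : (r ^ (2 * r) + 20 * r * orderOf χ ^ 3) * √p ≤ η ^ (2 * r) * (#P * N)) :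
    ∑ an ∈ P ×ˢ Ioc 0 N with ¬ an.1 ∣ an.2, shortSum χ B (an.2 / an.1) ≤
      #P * (B * (η * N)) := by
  have hcard : (#{an ∈ P ×ˢ Ioc 0 N | ¬ an.1 ∣ an.2} : ℝ) ≤ #P * N := by
    exact_mod_cast (card_filter_le _ _).trans_eq (by simp)
  refine le_of_pow_le_pow_left₀ (n := 2 * r - 1 + 1) (by lia) (by positivity) ?_
  calc _ ≤ _ := sum_comp_pow_le_of_injOn (injOn_cast_div_cast hP hAN) (shortSum_nonneg B) _
    _ ≤ (#P * N : ℝ) ^ (2 * r - 1) * (η ^ (2 * r) * (#P * N) * B ^ (2 * r)) := by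
        rw [Nat.sub_add_cancel (by lia)]
        gcongr
        · exact sum_nonneg fun x _ ↦ pow_nonneg (shortSum_nonneg B x) _
        · exact (sum_shortSum_pow_le hχ hr hB hpB).trans (by gcongr)
    _ = η ^ (2 * r) * B ^ (2 * r) * (#P * N : ℝ) ^ (2 * r - 1 + 1) := by ring
    _ = (#P * (B * (η * N))) ^ (2 * r - 1 + 1) := by
        rw [Nat.sub_add_cancel (by lia)]
        ring

theorem norm_sum_mulChar_le_of_primes (hχ : 1 < orderOf χ) {r A A₀ B N : ℕ} {P : Finset ℕ} {η : ℝ}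
    (hr : 0 < r) (hη : 0 ≤ η) (hB : B ≤ p) (hpB : √p ≤ B ^ r) (hA₀ : 0 < A₀) (hAN : A * N < p)
    (hP : ∀ a ∈ P, a.Prime ∧ A₀ ≤ a ∧ a ≤ A)
    (hη' : (r ^ (2 * r) + 20 * r * orderOf χ ^ 3) * √p ≤ η ^ (2 * r) * (#P * N)) :
    ‖∑ n ∈ Ioc 0 N, χ n‖ ≤ η * N + N / A₀ + 2 * A * B := by
  have hp : 0 < √p := by simpa using (Fact.out : p.Prime).pos
  have hBpos : (0 : ℝ) < B := by
    rw [Nat.cast_pos, Nat.pos_iff_ne_zero]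
    rintro rfl
    simp [hr.ne', hp.not_ge] at hpB
  obtain ⟨hPpos, hN⟩ : 0 < #P ∧ 0 < N := by
    have : 0 < η ^ (2 * r) * (#P * N) := lt_of_lt_of_le (by positivity) hη'
    simpa [Nat.pos_iff_ne_zero] using (right_ne_zero_of_mul this.ne')
  have hne (a) (ha : a ∈ P) : (a : ZMod p) ≠ 0 := by
    rw [Ne, ZMod.natCast_eq_zero_iff]
    exact Nat.not_dvd_of_pos_of_lt (hP a ha).1.pos
      ((hP a ha).2.2.trans_lt ((Nat.le_mul_of_pos_right A hN).trans_lt hAN))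
  have hdvd := sum_shortSum_dvd_le (χ := χ) hA₀ (fun a ha ↦ (hP a ha).2.1) B N
  have hndvd := sum_shortSum_not_dvd_le hχ hr hη hB hpB hAN
    (fun a ha ↦ ⟨(hP a ha).1, (hP a ha).2.2⟩) hη'
  suffices #P * (B * ‖∑ n ∈ Ioc 0 N, χ n‖) ≤ #P * (B * (η * N + N / A₀ + 2 * A * B)) from
    le_of_mul_le_mul_left (le_of_mul_le_mul_left this (by positivity)) hBpos
  calc #P * (B * ‖∑ n ∈ Ioc 0 N, χ n‖)
      ≤ ∑ a ∈ P, (∑ n ∈ Ioc 0 N, shortSum χ B (n / a) + B * (2 * (A * B))) := by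
        rw [← nsmul_eq_mul]
        refine card_nsmul_le_sum _ _ _ fun a ha ↦ (mul_norm_sum_mulChar_le (hne a ha) B N).trans ?_
        have := (hP a ha).2.2
        gcongr
    _ = ∑ an ∈ P ×ˢ Ioc 0 N with an.1 ∣ an.2, shortSum χ B (an.2 / an.1) +
        ∑ an ∈ P ×ˢ Ioc 0 N with ¬ an.1 ∣ an.2, shortSum χ B (an.2 / an.1) +
        #P * (B * (2 * (A * B))) := by
        rw [sum_add_distrib, sum_filter_add_sum_filter_not, sum_product]
        simp
    _ ≤ _ := by linarith

end Burgess

section Mertens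

open ArithmeticFunction (vonMangoldt vonMangoldt_mul_zeta vonMangoldt_nonneg
  vonMangoldt_apply_prime sum_Ioc_mul_zeta_eq_sum log_apply)
open Filter

theorem sum_vonMangoldt_mul_div_eq_log_factorial (N : ℕ) :
    ∑ d ∈ Ioc 0 N, vonMangoldt d * (N / d : ℕ) = Real.log N.factorial := by
  rw [← sum_Ioc_mul_zeta_eq_sum, vonMangoldt_mul_zeta]
  induction N with
  | zero => simp
  | succ n ih =>
    rw [sum_Ioc_succ_top n.zero_le, ih, Nat.factorial_succ, Nat.cast_mul,
      Real.log_mul (by positivity) (by positivity), log_apply, add_comm]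

theorem log_sub_one_le_sum_vonMangoldt_div (N : ℕ) :
    Real.log N - 1 ≤ ∑ d ∈ Ioc 0 N, vonMangoldt d / d := by
  rcases N.eq_zero_or_pos with rfl | hN
  · simp
  refine le_of_mul_le_mul_left ?_ (Nat.cast_pos.2 hN : (0 : ℝ) < N)
  calc N * (Real.log N - 1) ≤ Real.log N.factorial := by
        have hstirling := Stirling.le_log_factorial_stirling hN.ne'
        have hpi := Real.log_nonneg (by linarith [Real.pi_gt_three] : 1 ≤ 2 * Real.pi)
        linarith [Real.log_natCast_nonneg N]
    _ = ∑ d ∈ Ioc 0 N, vonMangoldt d * (N / d : ℕ) :=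
        (sum_vonMangoldt_mul_div_eq_log_factorial N).symm
    _ ≤ ∑ d ∈ Ioc 0 N, vonMangoldt d * (N / d : ℝ) := by
        gcongr
        exact Nat.cast_div_le
    _ = N * ∑ d ∈ Ioc 0 N, vonMangoldt d / d := by
        rw [mul_sum]
        exact sum_congr rfl fun d _ ↦ by ring

theorem sum_vonMangoldt_Ioc_le (N : ℕ) : ∑ d ∈ Ioc 0 N, vonMangoldt d ≤ 6 * N := by
  have hpsi := Chebyshev.psi_le_const_mul_self (x := N) (by positivity)
  rw [Chebyshev.psi, Nat.floor_natCast] at hpsi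
  have hlog : Real.log 4 ≤ 2 := by
    rw [show (4 : ℝ) = 2 ^ 2 by norm_num, Real.log_pow]
    push_cast
    linarith [Real.log_two_lt_d9]
  exact hpsi.trans (by gcongr; linarith)

theorem sum_vonMangoldt_div_le_log_add (N : ℕ) :
    ∑ d ∈ Ioc 0 N, vonMangoldt d / d ≤ Real.log N + 6 := by
  rcases N.eq_zero_or_pos with rfl | hN
  · simp
  have hfloor {d : ℕ} (hd : 0 < d) : (N / d : ℝ) ≤ (N / d : ℕ) + 1 := by
    rw [div_le_iff₀' (Nat.cast_pos.2 hd)]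
    exact_mod_cast (Nat.lt_mul_div_succ N hd).le
  refine le_of_mul_le_mul_left ?_ (Nat.cast_pos.2 hN : (0 : ℝ) < N)
  calc N * ∑ d ∈ Ioc 0 N, vonMangoldt d / d = ∑ d ∈ Ioc 0 N, vonMangoldt d * (N / d : ℝ) := by
        rw [mul_sum]
        exact sum_congr rfl fun d _ ↦ by ring
    _ ≤ ∑ d ∈ Ioc 0 N, vonMangoldt d * ((N / d : ℕ) + 1) := by
        gcongr with d hd
        exact hfloor (mem_Ioc.1 hd).1
    _ = Real.log N.factorial + ∑ d ∈ Ioc 0 N, vonMangoldt d := by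
        rw [← sum_vonMangoldt_mul_div_eq_log_factorial, ← sum_add_distrib]
        exact sum_congr rfl fun d _ ↦ by ring
    _ ≤ N * Real.log N + 6 * N := by
        refine add_le_add ?_ (sum_vonMangoldt_Ioc_le N)
        rw [← Real.log_pow]
        gcongr
        exact_mod_cast N.factorial_le_pow
    _ = N * (Real.log N + 6) := by ring

theorem sum_prime_one_div_mul_log_le {z : ℝ} (hz : 1 ≤ z) (n : ℕ) :
    (∑ l ∈ Ioc ⌊z⌋₊ n with l.Prime, (1 / l : ℝ)) * Real.log z ≤
      ∑ d ∈ Ioc ⌊z⌋₊ n, vonMangoldt d / d := by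
  rw [sum_mul]
  refine (sum_le_sum fun l hl ↦ ?_).trans (sum_le_sum_of_subset_of_nonneg (filter_subset _ _)
    fun d _ _ ↦ div_nonneg vonMangoldt_nonneg d.cast_nonneg)
  obtain ⟨hl, hprime⟩ := mem_filter.1 hl
  have hzl : z < l := (Nat.floor_lt (by linarith)).1 (mem_Ioc.1 hl).1
  rw [one_div_mul_eq_div, vonMangoldt_apply_prime hprime]
  gcongr

theorem sum_prime_one_div_le {z w : ℝ} (hz : 1 < z) (hzw : z ≤ w) :
    ∑ l ∈ Ioc ⌊z⌋₊ ⌊w⌋₊ with l.Prime, (1 / l : ℝ) ≤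
      (Real.log w - Real.log z + 8) / Real.log z := by
  have hfz : (1 : ℝ) ≤ ⌊z⌋₊ := by exact_mod_cast Nat.le_floor (by exact_mod_cast hz.le)
  have hfzw : ⌊z⌋₊ ≤ ⌊w⌋₊ := Nat.floor_mono hzw
  have hlog_w : Real.log ⌊w⌋₊ ≤ Real.log w :=
    Real.log_le_log (one_pos.trans_le (hfz.trans (by exact_mod_cast hfzw)))
      (Nat.floor_le (by linarith))
  have hlog_z : Real.log z ≤ Real.log ⌊z⌋₊ + 1 := by
    have hle : Real.log z ≤ Real.log (2 * ⌊z⌋₊) :=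
      Real.log_le_log (by linarith) (by linarith [Nat.lt_floor_add_one z])
    rw [Real.log_mul two_ne_zero (by positivity)] at hle
    linarith [Real.log_two_lt_d9]
  rw [le_div_iff₀ (Real.log_pos hz)]
  linarith [sum_prime_one_div_mul_log_le hz.le ⌊w⌋₊, log_sub_one_le_sum_vonMangoldt_div ⌊z⌋₊,
    sum_vonMangoldt_div_le_log_add ⌊w⌋₊,
    sum_Ioc_consecutive (fun d : ℕ ↦ (vonMangoldt d / d : ℝ)) ⌊z⌋₊.zero_le hfzw]

theorem sum_prime_one_div_rpow_pow_le {y c : ℝ} (hy : 1 < y) (hc : 1 ≤ c) (k : ℕ) :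
    ∑ l ∈ Ioc ⌊y⌋₊ ⌊y ^ c ^ k⌋₊ with l.Prime, (1 / l : ℝ) ≤ k * (c - 1 + 8 / Real.log y) := by
  have hlog := Real.log_pos hy
  have hle (i : ℕ) : y ≤ y ^ c ^ i := Real.self_le_rpow_of_one_le hy.le (one_le_pow₀ hc)
  induction k with
  | zero => simp
  | succ k ih =>
    have hstep : y ^ c ^ k ≤ y ^ c ^ (k + 1) :=
      Real.rpow_le_rpow_of_exponent_le hy.le (pow_le_pow_right₀ hc k.le_succ)
    have hck : 1 ≤ c ^ k := one_le_pow₀ hc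
    have hblock : ∑ l ∈ Ioc ⌊y ^ c ^ k⌋₊ ⌊y ^ c ^ (k + 1)⌋₊ with l.Prime, (1 / l : ℝ) ≤
        c - 1 + 8 / Real.log y := by
      refine (sum_prime_one_div_le (hy.trans_le (hle k)) hstep).trans ?_
      rw [Real.log_rpow (by linarith), Real.log_rpow (by linarith)]
      calc (c ^ (k + 1) * Real.log y - c ^ k * Real.log y + 8) / (c ^ k * Real.log y)
          = c - 1 + 8 / (c ^ k * Real.log y) := by field_simp; ring
        _ ≤ c - 1 + 8 / Real.log y := by
          gcongr
          exact le_mul_of_one_le_left hlog.le hck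
    rw [sum_filter] at *
    rw [← sum_Ioc_consecutive _ (Nat.floor_mono (hle k)) (Nat.floor_mono hstep)]
    push_cast
    linarith

theorem exists_lt_mul_exp {a b t : ℝ} (ht : 0 < t) (h : b < a * Real.exp t) :
    ∃ s, 0 < s ∧ s < t ∧ b < a * Real.exp s := by
  have hcont : ContinuousAt (fun s ↦ a * Real.exp s) t := by fun_prop
  obtain ⟨s, hs, hst⟩ := ((hcont.eventually_const_lt h).filter_mono nhdsWithin_le_nhds |>.and
    (Ioo_mem_nhdsLT ht)).exists
  exact ⟨s, hst.1, hst.2, hs⟩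

theorem eventually_sum_prime_one_div_le {a b t : ℝ} (ha : 0 < a) (ht : 0 < t)
    (hab : b < a * Real.exp t) :
    ∀ᶠ x : ℝ in atTop, ∑ l ∈ Ioc ⌊x ^ a⌋₊ ⌊x ^ b⌋₊ with l.Prime, (1 / l : ℝ) ≤ t := by
  obtain ⟨s, hs, hst, hbs⟩ := exists_lt_mul_exp ht hab
  rw [← div_lt_iff₀' ha] at hbs
  obtain ⟨k, hbk, hk⟩ := (((Real.tendsto_one_add_div_pow_exp s).eventually_const_lt hbs).and
    (eventually_gt_atTop 0)).exists
  rw [div_lt_iff₀' ha] at hbk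
  have hlim : Tendsto (fun x : ℝ ↦ Real.log (x ^ a)) atTop atTop :=
    Real.tendsto_log_atTop.comp (tendsto_rpow_atTop ha)
  filter_upwards [hlim.eventually_ge_atTop (8 * k / (t - s)), eventually_gt_atTop 1] with x hx hx1
  have hxa : 1 < x ^ a := Real.one_lt_rpow hx1 ha
  have hlog : 0 < Real.log (x ^ a) := Real.log_pos hxa
  have hb : x ^ b ≤ (x ^ a) ^ (1 + s / k) ^ k := by
    rw [← Real.rpow_mul (by linarith)]
    exact Real.rpow_le_rpow_of_exponent_le hx1.le hbk.le
  calc ∑ l ∈ Ioc ⌊x ^ a⌋₊ ⌊x ^ b⌋₊ with l.Prime, (1 / l : ℝ)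
      ≤ ∑ l ∈ Ioc ⌊x ^ a⌋₊ ⌊(x ^ a) ^ (1 + s / k) ^ k⌋₊ with l.Prime, (1 / l : ℝ) := by
        gcongr
    _ ≤ k * (1 + s / k - 1 + 8 / Real.log (x ^ a)) :=
        sum_prime_one_div_rpow_pow_le hxa (le_add_of_nonneg_right (by positivity)) k
    _ = s + 8 * k / Real.log (x ^ a) := by field_simp; ring
    _ ≤ t := by
        rw [div_le_comm₀ (by linarith) hlog] at hx
        linarith

end Mertens

section Asymptotics

open Filter

theorem eventually_const_mul_rpow_le_rpow {s t : ℝ} (hst : s < t) (C : ℝ) :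
    ∀ᶠ x : ℝ in atTop, C * x ^ s ≤ x ^ t := by
  filter_upwards [(tendsto_rpow_atTop (sub_pos.2 hst)).eventually_ge_atTop C,
    eventually_gt_atTop 0] with x hx hx0
  calc C * x ^ s ≤ x ^ (t - s) * x ^ s := by gcongr
    _ = x ^ t := by rw [← Real.rpow_add hx0, sub_add_cancel]

theorem eventually_rpow_le_primeCounting {s : ℝ} (hs : s < 1) :
    ∀ᶠ x : ℝ in atTop, x ^ s ≤ Nat.primeCounting ⌊x⌋₊ := by
  have hlog := (isLittleO_log_rpow_atTop (sub_pos.2 hs)).bound (show (0 : ℝ) < 1 / 2 by norm_num)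
  have hlog' := (isLittleO_log_rpow_atTop one_pos).bound (show (0 : ℝ) < 1 / 100 by norm_num)
  filter_upwards [hlog, hlog', eventually_ge_atTop 20] with x hlog hlog' hx
  have hlogx : 0 < Real.log x := Real.log_pos (by linarith)
  rw [Real.norm_of_nonneg hlogx.le, Real.norm_of_nonneg (by positivity)] at hlog hlog'
  rw [Real.rpow_one] at hlog'
  refine le_trans ?_ (Chebyshev.pi_ge' (by linarith))
  rw [le_div_iff₀ hlogx]
  have hlog_add : Real.log (x + 2) ≤ 1 + Real.log x := by
    have hle : Real.log (x + 2) ≤ Real.log (2 * x) := Real.log_le_log (by linarith) (by linarith)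
    rw [Real.log_mul two_ne_zero (by linarith)] at hle
    linarith [Real.log_two_lt_d9]
  calc x ^ s * Real.log x ≤ x ^ s * (1 / 2 * x ^ (1 - s)) := by gcongr
    _ = x / 2 := by
        rw [mul_left_comm, ← Real.rpow_add (by linarith), add_sub_cancel, Real.rpow_one]
        ring
    _ ≤ (x - 1) * Real.log 2 - Real.log (x + 2) := by nlinarith [Real.log_two_gt_d9]

theorem eventually_rpow_le_primeCounting_rpow {s t : ℝ} (ht : 0 < t) (hst : s < t) :
    ∀ᶠ x : ℝ in atTop, x ^ s ≤ Nat.primeCounting ⌊x ^ t⌋₊ := by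
  filter_upwards [(tendsto_rpow_atTop ht).eventually
    (eventually_rpow_le_primeCounting ((div_lt_one ht).2 hst)), eventually_ge_atTop 0] with x hx hx0
  rwa [← Real.rpow_mul hx0, mul_div_cancel₀ _ ht.ne'] at hx

theorem eventually_rpow_le_card_primesLE_filter {s t : ℝ} (hs : 0 < s) (hst : s < t) (A₀ : ℕ) :
    ∀ᶠ x : ℝ in atTop, x ^ s ≤ #{a ∈ ⌊x ^ t⌋₊.primesLE | A₀ ≤ a} := by
  obtain ⟨u, hsu, hut⟩ := exists_between hst
  filter_upwards [eventually_rpow_le_primeCounting_rpow (by linarith) hut,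
    eventually_const_mul_rpow_le_rpow hsu 2, (tendsto_rpow_atTop hs).eventually_ge_atTop (A₀ : ℝ)]
    with x hpi hu hA₀
  have hsmall : #{a ∈ ⌊x ^ t⌋₊.primesLE | ¬ A₀ ≤ a} ≤ A₀ := by
    simpa using card_le_card (t := range A₀) fun a ha ↦ mem_range.2 (not_le.1 (mem_filter.1 ha).2)
  have hcard : ⌊x ^ t⌋₊.primeCounting ≤ #{a ∈ ⌊x ^ t⌋₊.primesLE | A₀ ≤ a} + A₀ := by
    rw [← Nat.primesLE_card_eq_primeCounting,
      ← card_filter_add_card_filter_not (s := ⌊x ^ t⌋₊.primesLE) (A₀ ≤ ·)]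
    gcongr
  have hcard' : (⌊x ^ t⌋₊.primeCounting : ℝ) ≤ #{a ∈ ⌊x ^ t⌋₊.primesLE | A₀ ≤ a} + A₀ := by
    exact_mod_cast hcard
  linarith

theorem rpow_div_two_le_floor {x s : ℝ} (hx : 1 ≤ x) (hs : 0 ≤ s) : x ^ s / 2 ≤ ⌊x ^ s⌋₊ := by
  have hone : (1 : ℝ) ≤ ⌊x ^ s⌋₊ := by
    exact_mod_cast Nat.le_floor (by simpa using Real.one_le_rpow hx hs)
  linarith [Nat.lt_floor_add_one (x ^ s)]

theorem ceil_rpow_le_two_mul {x s : ℝ} (hx : 1 ≤ x) (hs : 0 ≤ s) : (⌈x ^ s⌉₊ : ℝ) ≤ 2 * x ^ s := by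
  linarith [Nat.ceil_lt_add_one (a := x ^ s) (by positivity), Real.one_le_rpow hx hs]

end Asymptotics

section SmallOrder

open Filter

variable {p : ℕ} [Fact p.Prime]

-- The products of `k` distinct primes up to `z` are distinct modulo `p`.
theorem choose_primeCounting_le {G k z : ℕ} (hG : 0 < G) (hz : z ^ k ≤ p)
    (h : ∀ l : ℕ, l.Prime → l ≤ z → (l : ZMod p) ^ G = 1) :
    z.primeCounting.choose k ≤ G := by
  have hprime {S : Finset ℕ} (hS : S ∈ z.primesLE.powersetCard k) {l : ℕ} (hl : l ∈ S) :
      l ≤ z ∧ l.Prime :=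
    Nat.mem_primesLE.1 ((mem_powersetCard.1 hS).1 hl)
  have hprod {S : Finset ℕ} (hS : S ∈ z.primesLE.powersetCard k) :
      0 < ∏ l ∈ S, l ∧ ∏ l ∈ S, l ≤ p := by
    refine ⟨prod_pos fun l hl ↦ (hprime hS hl).2.pos, ?_⟩
    calc ∏ l ∈ S, l ≤ z ^ #S := prod_le_pow_card _ _ _ fun l hl ↦ (hprime hS hl).1
      _ ≤ p := by rwa [(mem_powersetCard.1 hS).2]
  have hmaps : ∀ S ∈ z.primesLE.powersetCard k,
      ((∏ l ∈ S, l : ℕ) : ZMod p) ∈ Polynomial.nthRootsFinset G 1 := by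
    intro S hS
    rw [Polynomial.mem_nthRootsFinset hG, Nat.cast_prod, ← prod_pow]
    exact prod_eq_one fun l hl ↦ h l (hprime hS hl).2 (hprime hS hl).1
  have hinj : Set.InjOn (fun S ↦ ((∏ l ∈ S, l : ℕ) : ZMod p)) (z.primesLE.powersetCard k) := by
    intro S hS T hT hST
    have heq : ∏ l ∈ S, l = ∏ l ∈ T, l :=
      ((ZMod.natCast_eq_natCast_iff _ _ _).1 hST).eq_of_abs_lt (by
        have := hprod hS
        have := hprod hT
        rw [abs_lt]
        lia)
    rw [← Nat.primeFactors_prod fun l hl ↦ (hprime hS hl).2, heq,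
      Nat.primeFactors_prod fun l hl ↦ (hprime hT hl).2]
  calc z.primeCounting.choose k = #(z.primesLE.powersetCard k) := by
        rw [card_powersetCard, Nat.primesLE_card_eq_primeCounting]
    _ ≤ #(Polynomial.nthRootsFinset G (1 : ZMod p)) := card_le_card_of_injOn _ hmaps hinj
    _ ≤ G := by
        rw [Polynomial.nthRootsFinset_def]
        exact (Multiset.toFinset_card_le _).trans (Polynomial.card_nthRoots _ _)

theorem pow_div_le_choose {k n : ℕ} (hkn : 2 * k ≤ n) :
    (n : ℝ) ^ k / (2 ^ k * k.factorial) ≤ n.choose k := by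
  refine le_trans ?_ (Nat.pow_le_choose k n)
  have hsub : (n / 2 : ℝ) ≤ (n + 1 - k : ℕ) := by
    rw [div_le_iff₀ two_pos]
    exact_mod_cast (by lia : n ≤ (n + 1 - k) * 2)
  rw [← div_div, ← div_pow]
  gcongr

theorem eventually_rpow_le_choose_primeCounting {s : ℝ} (hs : s < 1) {k : ℕ} (hk : 0 < k) :
    ∀ᶠ x : ℝ in atTop, x ^ s ≤ (Nat.primeCounting ⌊x ^ (1 / k : ℝ)⌋₊).choose k := by
  obtain ⟨u, hsu, hu⟩ := exists_between hs
  have hk' : (0 : ℝ) < 1 / k := by positivity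
  have hlim := Nat.tendsto_primeCounting.comp
    (tendsto_nat_floor_atTop.comp (tendsto_rpow_atTop (y := 1 / k) hk'))
  filter_upwards [eventually_rpow_le_primeCounting_rpow hk' (div_lt_div_of_pos_right hu
    (Nat.cast_pos.2 hk)), hlim.eventually_ge_atTop (2 * k), eventually_ge_atTop 0,
    eventually_const_mul_rpow_le_rpow hsu (2 ^ k * k.factorial)] with x hpi hlarge hx hC
  refine le_trans ?_ (pow_div_le_choose hlarge)
  rw [le_div_iff₀' (by positivity)]
  calc 2 ^ k * k.factorial * x ^ s ≤ x ^ u := hC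
    _ = (x ^ (u / k)) ^ k := by
        rw [← Real.rpow_natCast, ← Real.rpow_mul hx, div_mul_cancel₀ _ (by positivity)]
    _ ≤ _ := by gcongr

theorem eventually_orderOf_mulChar_le {κ : ℝ} (hκ : 0 < κ) {k : ℕ} (hk : 0 < k) :
    ∀ᶠ p : ℕ in atTop, ∀ [Fact p.Prime] (χ : MulChar (ZMod p) ℂ),
      (∀ l : ℕ, l.Prime → (l : ℝ) ≤ p ^ (1 / k : ℝ) → χ l = 1) → orderOf χ ≤ (p : ℝ) ^ κ := by
  filter_upwards [tendsto_natCast_atTop_atTop.eventually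
    (eventually_rpow_le_choose_primeCounting (sub_lt_self 1 hκ) hk)] with p hp _ χ h
  have hp0 : (0 : ℝ) < p := by exact_mod_cast (Fact.out : p.Prime).pos
  have hord := orderOf_mulChar_mul_add_one (χ := χ)
  set G := (p - 1) / orderOf χ
  have hG : 0 < G := by
    refine Nat.pos_of_ne_zero fun h0 ↦ (Fact.out : p.Prime).one_lt.ne ?_
    rwa [h0, zero_mul, zero_add] at hord
  have hz : ⌊(p : ℝ) ^ (1 / k : ℝ)⌋₊ ^ k ≤ p := by
    rw [← Nat.cast_le (α := ℝ), Nat.cast_pow]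
    calc (⌊(p : ℝ) ^ (1 / k : ℝ)⌋₊ : ℝ) ^ k ≤ ((p : ℝ) ^ (1 / k : ℝ)) ^ k := by
          gcongr
          exact Nat.floor_le (by positivity)
      _ = p := by rw [one_div, Real.rpow_inv_natCast_pow hp0.le hk.ne']
  have hle := choose_primeCounting_le hG hz fun l hl hlz ↦ by
    have hχl := h l hl ((Nat.cast_le.2 hlz).trans (Nat.floor_le (by positivity)))
    rw [pow_eq_pow_of_mulChar_apply_eq (χ := χ) (b := 1) (by rwa [ZMod.card]) ?_ one_ne_zero
      (by rw [hχl, map_one]), one_pow]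
    rintro h0
    rw [h0, MulChar.map_zero] at hχl
    exact zero_ne_one hχl
  refine le_of_mul_le_mul_left ?_ (Nat.cast_pos.2 hG : (0 : ℝ) < G)
  calc (G : ℝ) * orderOf χ ≤ p := by exact_mod_cast (Nat.le_succ _).trans_eq hord
    _ = (p : ℝ) ^ (1 - κ) * (p : ℝ) ^ κ := by
        rw [← Real.rpow_add hp0, sub_add_cancel, Real.rpow_one]
    _ ≤ G * (p : ℝ) ^ κ := by
        gcongr
        exact hp.trans (by exact_mod_cast hle)

end SmallOrder

section BurgessAsymptotics

open Filter

theorem eventually_const_mul_floor_mul_ceil_le {s t u : ℝ} (ht : 0 ≤ t) (hu : 0 ≤ u)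
    (hstu : s + t < u) {C : ℝ} (hC : 0 ≤ C) :
    ∀ᶠ x : ℝ in atTop, C * (⌊x ^ s⌋₊ * ⌈x ^ t⌉₊) ≤ ⌊x ^ u⌋₊ := by
  filter_upwards [eventually_const_mul_rpow_le_rpow hstu (4 * C), eventually_ge_atTop 1]
    with x hx hx1
  calc C * (⌊x ^ s⌋₊ * ⌈x ^ t⌉₊) ≤ C * (x ^ s * (2 * x ^ t)) := by
        gcongr
        · exact Nat.floor_le (by positivity)
        · exact ceil_rpow_le_two_mul hx1 ht
    _ = 4 * C * x ^ (s + t) / 2 := by rw [Real.rpow_add (by linarith)]; ring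
    _ ≤ x ^ u / 2 := by gcongr
    _ ≤ ⌊x ^ u⌋₊ := rpow_div_two_le_floor hx1 hu

theorem floor_rpow_mul_floor_rpow_lt {x s t : ℝ} (hx : 1 < x) (hst : s + t < 1) :
    (⌊x ^ s⌋₊ * ⌊x ^ t⌋₊ : ℝ) < x := by
  calc (⌊x ^ s⌋₊ * ⌊x ^ t⌋₊ : ℝ) ≤ x ^ s * x ^ t := by
        gcongr <;> exact Nat.floor_le (by positivity)
    _ = x ^ (s + t) := (Real.rpow_add (by linarith) s t).symm
    _ < x := Real.rpow_lt_self_of_one_lt hx hst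

theorem sqrt_le_ceil_rpow_pow {x : ℝ} (hx : 0 ≤ x) {r : ℕ} (hr : 0 < r) :
    √x ≤ (⌈x ^ (1 / (2 * r) : ℝ)⌉₊ : ℝ) ^ r := by
  calc √x = (x ^ (1 / (2 * r) : ℝ)) ^ r := by
        rw [Real.sqrt_eq_rpow, ← Real.rpow_natCast, ← Real.rpow_mul hx]
        congr 1
        field_simp
    _ ≤ (⌈x ^ (1 / (2 * r) : ℝ)⌉₊ : ℝ) ^ r := by
        gcongr
        exact Nat.le_ceil _

theorem eventually_moment_constant_le {δ η : ℝ} (hδ : 0 < δ) (hη : 0 < η) (r A₀ : ℕ) :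
    ∀ᶠ x : ℝ in atTop, ∀ d : ℕ, (d : ℝ) ≤ x ^ (δ / 6) →
      (r ^ (2 * r) + 20 * r * d ^ 3) * √x ≤
        η ^ (2 * r) * (#{a ∈ ⌊x ^ (1 / 4 + δ / 2)⌋₊.primesLE | A₀ ≤ a} * ⌊x ^ (1 / 4 + δ)⌋₊) := by
  have hexp : 1 / 2 + δ / 2 < (1 / 4 + δ / 4) + (1 / 4 + δ) := by linarith
  filter_upwards [eventually_const_mul_rpow_le_rpow hexp
      (2 * (r ^ (2 * r) + 20 * r) / η ^ (2 * r)),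
    eventually_rpow_le_card_primesLE_filter (by linarith)
      (by linarith : 1 / 4 + δ / 4 < 1 / 4 + δ / 2) A₀, eventually_ge_atTop 1]
    with x hx hprimes hx1 d hd
  have hd3 : (d : ℝ) ^ 3 ≤ x ^ (δ / 2) := by
    calc (d : ℝ) ^ 3 ≤ (x ^ (δ / 6)) ^ 3 := by gcongr
      _ = x ^ (δ / 2) := by
        rw [← Real.rpow_natCast, ← Real.rpow_mul (by linarith)]
        congr 1
        push_cast
        ring
  have hone : 1 ≤ x ^ (δ / 2) := Real.one_le_rpow hx1 (by linarith)
  rw [div_mul_eq_mul_div, div_le_iff₀' (by positivity)] at hx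
  calc (r ^ (2 * r) + 20 * r * d ^ 3) * √x
      ≤ (r ^ (2 * r) * x ^ (δ / 2) + 20 * r * x ^ (δ / 2)) * x ^ (1 / 2 : ℝ) := by
        rw [Real.sqrt_eq_rpow]
        gcongr
        exact le_mul_of_one_le_right (by positivity) hone
    _ = 2 * (r ^ (2 * r) + 20 * r) * x ^ (1 / 2 + δ / 2) / 2 := by
        rw [Real.rpow_add (by linarith)]
        ring
    _ ≤ η ^ (2 * r) * x ^ ((1 / 4 + δ / 4) + (1 / 4 + δ)) / 2 := by gcongr
    _ = η ^ (2 * r) * (x ^ (1 / 4 + δ / 4) * (x ^ (1 / 4 + δ) / 2)) := by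
        rw [Real.rpow_add (by linarith) (1 / 4 + δ / 4)]
        ring
    _ ≤ _ := by
        gcongr
        exact rpow_div_two_le_floor hx1 (by linarith)

theorem eventually_norm_sum_mulChar_le {δ η : ℝ} (hδ : 0 < δ) (hδ' : δ < 1 / 3) (hη : 0 < η) :
    ∀ᶠ p : ℕ in atTop, ∀ [Fact p.Prime] (χ : MulChar (ZMod p) ℂ), 1 < orderOf χ →
      orderOf χ ≤ (p : ℝ) ^ (δ / 6) →
      ‖∑ n ∈ Ioc 0 ⌊(p : ℝ) ^ (1 / 4 + δ)⌋₊, χ n‖ ≤ η * ⌊(p : ℝ) ^ (1 / 4 + δ)⌋₊ := by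
  obtain ⟨r, hr⟩ := exists_nat_gt (1 / δ)
  obtain ⟨A₀, hA₀⟩ := exists_nat_gt (3 / η)
  have hr0 : (0 : ℝ) < r := (by positivity : 0 < 1 / δ).trans hr
  have hA₀0 : (0 : ℝ) < A₀ := (by positivity : 0 < 3 / η).trans hA₀
  have hrδ : 1 / (2 * r) < δ / 2 := by
    rw [div_lt_iff₀ hδ] at hr
    rw [div_lt_div_iff₀ (by positivity) two_pos]
    linarith
  filter_upwards [tendsto_natCast_atTop_atTop.eventually
      (eventually_moment_constant_le hδ (by positivity : 0 < η / 3) r A₀),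
    tendsto_natCast_atTop_atTop.eventually
      (eventually_const_mul_floor_mul_ceil_le (t := 1 / (2 * r)) (u := 1 / 4 + δ)
        (by positivity) (by positivity) (by linarith : 1 / 4 + δ / 2 + _ < _)
        (by positivity : 0 ≤ 6 / η)),
    eventually_gt_atTop 1] with p hmoment hAB hp _ χ hχ hord
  have hp1 : (1 : ℝ) < p := by exact_mod_cast hp
  set N := ⌊(p : ℝ) ^ (1 / 4 + δ)⌋₊
  set A := ⌊(p : ℝ) ^ (1 / 4 + δ / 2)⌋₊
  set B := ⌈(p : ℝ) ^ (1 / (2 * r) : ℝ)⌉₊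
  have hB : B ≤ p := Nat.ceil_le.2 (Real.rpow_le_self_of_one_le hp1.le (by linarith))
  have hAN : A * N < p := by
    exact_mod_cast floor_rpow_mul_floor_rpow_lt hp1 (by linarith : 1 / 4 + δ / 2 + (1 / 4 + δ) < 1)
  have hbound := norm_sum_mulChar_le_of_primes hχ (Nat.cast_pos.1 hr0) (by positivity) hB
    (sqrt_le_ceil_rpow_pow (by positivity) (Nat.cast_pos.1 hr0)) (Nat.cast_pos.1 hA₀0) hAN
    (P := {a ∈ A.primesLE | A₀ ≤ a}) (fun a ha ↦ by
      simp only [mem_filter, Nat.mem_primesLE] at ha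
      exact ⟨ha.1.2, ha.2, ha.1.1⟩) (hmoment _ hord)
  have hdiv : (N : ℝ) / A₀ ≤ η / 3 * N := by
    rw [div_eq_inv_mul]
    gcongr
    rw [inv_le_comm₀ hA₀0 (by positivity), inv_div]
    exact hA₀.le
  have hAB' : 2 * (A : ℝ) * B ≤ η / 3 * N := by
    rw [div_mul_eq_mul_div, div_le_iff₀' hη] at hAB
    linarith
  linarith

end BurgessAsymptotics

section Vinogradov

open Filter

theorem mulChar_natCast_eq_one {R S : Type*} [CommSemiring R] [CommMonoidWithZero S]
    {χ : MulChar R S} {n : ℕ} (hn : n ≠ 0) (h : ∀ l : ℕ, l.Prime → l ∣ n → χ l = 1) :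
    χ n = 1 := by
  rw [← Nat.prod_primeFactorsList hn, Nat.cast_list_prod, map_list_prod]
  refine List.prod_eq_one ?_
  simp only [List.mem_map]
  rintro _ ⟨_, ⟨l, hl, rfl⟩, rfl⟩
  exact h l (Nat.prime_of_mem_primeFactorsList hl) (Nat.dvd_of_mem_primeFactorsList hl)

theorem one_sub_le_re_mulChar {m N Y n : ℕ} {χ : MulChar (ZMod m) ℂ}
    (h : ∀ l : ℕ, l.Prime → l ≤ Y → χ l = 1) (hn : n ∈ Ioc 0 N) :
    1 - 2 * (#{l ∈ Ioc Y N | l.Prime ∧ l ∣ n} : ℝ) ≤ (χ n).re := by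
  obtain ⟨hn0, hnN⟩ := mem_Ioc.1 hn
  rcases ({l ∈ Ioc Y N | l.Prime ∧ l ∣ n}).eq_empty_or_nonempty with hempty | hne
  · have hχn : χ n = 1 := mulChar_natCast_eq_one hn0.ne' fun l hl hln ↦ h l hl <| by
      by_contra! hYl
      have hmem : l ∈ ({l ∈ Ioc Y N | l.Prime ∧ l ∣ n} : Finset ℕ) :=
        mem_filter.2 ⟨mem_Ioc.2 ⟨hYl, (Nat.le_of_dvd hn0 hln).trans hnN⟩, hl, hln⟩
      simp [hempty] at hmem
    simp [hempty, hχn]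
  · have hcard : (1 : ℝ) ≤ #{l ∈ Ioc Y N | l.Prime ∧ l ∣ n} := by exact_mod_cast hne.card_pos
    linarith [(abs_le.1 ((χ n).abs_re_le_norm.trans (DirichletCharacter.norm_le_one χ n))).1]

theorem sum_card_prime_dvd_le (Y N : ℕ) :
    ∑ n ∈ Ioc 0 N, (#{l ∈ Ioc Y N | l.Prime ∧ l ∣ n} : ℝ) ≤
      N * ∑ l ∈ Ioc Y N with l.Prime, (1 / l : ℝ) := by
  calc ∑ n ∈ Ioc 0 N, (#{l ∈ Ioc Y N | l.Prime ∧ l ∣ n} : ℝ)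
      = ∑ l ∈ Ioc Y N with l.Prime, ((N / l : ℕ) : ℝ) := by
        simp only [← filter_filter, ← Nat.Ioc_filter_dvd_card_eq_div]
        exact_mod_cast sum_card_bipartiteAbove_eq_sum_card_bipartiteBelow fun n l ↦ l ∣ n
    _ ≤ ∑ l ∈ Ioc Y N with l.Prime, (N * (1 / l) : ℝ) := by
        gcongr with l
        exact Nat.cast_div_le.trans_eq (div_eq_mul_one_div _ _)
    _ = _ := (mul_sum _ _ _).symm

-- Only the multiples of the primes between `Y` and `N` can contribute less than `1`.
theorem mul_one_sub_le_norm_sum_mulChar {m Y : ℕ} {χ : MulChar (ZMod m) ℂ}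
    (h : ∀ l : ℕ, l.Prime → l ≤ Y → χ l = 1) (N : ℕ) :
    N * (1 - 2 * ∑ l ∈ Ioc Y N with l.Prime, (1 / l : ℝ)) ≤ ‖∑ n ∈ Ioc 0 N, χ n‖ := by
  calc N * (1 - 2 * ∑ l ∈ Ioc Y N with l.Prime, (1 / l : ℝ))
      ≤ N - 2 * ∑ n ∈ Ioc 0 N, (#{l ∈ Ioc Y N | l.Prime ∧ l ∣ n} : ℝ) := by
        linarith [sum_card_prime_dvd_le Y N]
    _ = ∑ n ∈ Ioc 0 N, (1 - 2 * (#{l ∈ Ioc Y N | l.Prime ∧ l ∣ n} : ℝ)) := by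
        simp [sum_sub_distrib, mul_sum]
    _ ≤ ∑ n ∈ Ioc 0 N, (χ n).re := sum_le_sum fun n hn ↦ one_sub_le_re_mulChar h hn
    _ ≤ ‖∑ n ∈ Ioc 0 N, χ n‖ := by
        rw [← Complex.re_sum]
        exact Complex.re_le_norm _

theorem one_div_seven_le_of_lt_mul_exp {a : ℝ} (ha : 1 / 4 < a * Real.exp (1 / 2)) :
    1 / 7 ≤ a := by
  have hexp : Real.exp (1 / 2) < 7 / 4 := by
    rw [Real.exp_half, Real.sqrt_lt' (by norm_num)]
    linarith [Real.exp_one_lt_d9]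
  have ha0 : 0 < a := pos_of_mul_pos_left (by linarith) (Real.exp_pos _).le
  nlinarith

theorem eventually_exists_prime_mulChar_ne_one {a : ℝ} (ha : 1 / 4 < a * Real.exp (1 / 2)) :
    ∀ᶠ p : ℕ in atTop, ∀ [Fact p.Prime] (χ : MulChar (ZMod p) ℂ), 1 < orderOf χ →
      ∃ l : ℕ, l.Prime ∧ (l : ℝ) ≤ (p : ℝ) ^ a ∧ χ l ≠ 1 := by
  have ha7 : 1 / 7 ≤ a := one_div_seven_le_of_lt_mul_exp ha
  obtain ⟨δ, hδ, hδ'⟩ := exists_between (lt_min (sub_pos.2 ha) (by norm_num : (0 : ℝ) < 1 / 3))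
  obtain ⟨hδa, hδ3⟩ := lt_min_iff.1 hδ'
  obtain ⟨t, ht, ht2, hta⟩ := exists_lt_mul_exp one_half_pos (lt_sub_iff_add_lt'.1 hδa)
  filter_upwards [tendsto_natCast_atTop_atTop.eventually
      (eventually_sum_prime_one_div_le (by linarith) ht hta),
    eventually_norm_sum_mulChar_le hδ hδ3 (by linarith : 0 < 1 / 2 - t),
    eventually_orderOf_mulChar_le (by positivity : 0 < δ / 6) (by norm_num : 0 < 7),
    eventually_gt_atTop 1] with p hmertens hburgess horder hp _ χ hχ
  by_contra! hone
  have hp1 : (1 : ℝ) ≤ p := by exact_mod_cast hp.le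
  have hsmall : orderOf χ ≤ (p : ℝ) ^ (δ / 6) := horder χ fun l hl hlp ↦
    hone l hl (hlp.trans (Real.rpow_le_rpow_of_exponent_le hp1 (by exact_mod_cast ha7)))
  have hlower := mul_one_sub_le_norm_sum_mulChar (Y := ⌊(p : ℝ) ^ a⌋₊) (fun l hl hlY ↦
    hone l hl ((Nat.cast_le.2 hlY).trans (Nat.floor_le (by positivity))))
    ⌊(p : ℝ) ^ (1 / 4 + δ)⌋₊
  have hN : (0 : ℝ) < ⌊(p : ℝ) ^ (1 / 4 + δ)⌋₊ :=
    lt_of_lt_of_le (by positivity) (rpow_div_two_le_floor hp1 (by positivity))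
  have hle := le_of_mul_le_mul_left
    ((hlower.trans (hburgess χ hχ hsmall)).trans_eq (mul_comm _ _)) hN
  linarith

end Vinogradov

theorem burgess_vinogradov_nonresidue_general (ε : ℝ) (hε : 0 < ε) :
    ∃ p₀ : ℕ, ∀ p : ℕ, p.Prime → p₀ ≤ p →
      ∀ q : ℕ, ¬ q.Coprime (p - 1) →
        ∃ l : ℕ, l.Prime ∧ (l : ℝ) ≤ (p : ℝ) ^ (1 / (4 * Real.sqrt (Real.exp 1)) + ε) ∧
          ¬ ∃ y : (ZMod p)ˣ, ((y ^ q : (ZMod p)ˣ) : ZMod p) = (l : ZMod p) := by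
  have ha : 1 / 4 < (1 / (4 * √(Real.exp 1)) + ε) * Real.exp (1 / 2) := by
    have hpos : 0 < ε * √(Real.exp 1) := by positivity
    have hcancel : 1 / (4 * √(Real.exp 1)) * √(Real.exp 1) = 1 / 4 := by field_simp
    rw [Real.exp_half, add_mul, hcancel]
    linarith
  obtain ⟨p₀, hp₀⟩ := Filter.eventually_atTop.1 (eventually_exists_prime_mulChar_ne_one ha)
  refine ⟨p₀, fun p hp hle q hq ↦ ?_⟩
  have : Fact p.Prime := ⟨hp⟩
  have hgcd : 0 < q.gcd (p - 1) := Nat.gcd_pos_of_pos_right _ (Nat.sub_pos_of_lt hp.one_lt)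
  obtain ⟨χ, hχ⟩ := MulChar.exists_mulChar_orderOf (ZMod p)
    (by simpa only [ZMod.card] using Nat.gcd_dvd_right q (p - 1))
    (Complex.isPrimitiveRoot_exp _ hgcd.ne')
  obtain ⟨l, hl, hlp, hχl⟩ := hp₀ p hle χ (by rw [hχ]; exact lt_of_le_of_ne hgcd (Ne.symm hq))
  refine ⟨l, hl, hlp, fun ⟨y, hy⟩ ↦ hχl ?_⟩
  have hpow : χ ^ q = 1 := orderOf_dvd_iff_pow_eq_one.1 (hχ ▸ Nat.gcd_dvd_left q (p - 1))
  rw [← hy, Units.val_pow_eq_pow_val, map_pow, ← MulChar.pow_apply_coe, hpow, MulChar.one_apply_coe]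

/-- **Burgess bound + Vinogradov trick.** For every `ε > 0` there exists `p₀` such that for
every prime `p ≥ p₀` and every prime `q` dividing `p - 1`, there is an integer
`1 ≤ n ≤ p^{1/(4√e)+ε}` whose residue in `(ZMod p)ˣ` is not a `q`-th power. -/
theorem burgess_vinogradov_nonresidue (ε : ℝ) (hε : 0 < ε) :
    ∃ p₀ : ℕ, ∀ p : ℕ, p.Prime → p₀ ≤ p →
      ∀ q : ℕ, q.Prime → q ∣ p - 1 →
        ∃ n : ℕ, 1 ≤ n ∧ (n : ℝ) ≤ (p : ℝ) ^ (1 / (4 * Real.sqrt (Real.exp 1)) + ε) ∧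
          ¬ ∃ y : (ZMod p)ˣ, ((y ^ q : (ZMod p)ˣ) : ZMod p) = (n : ZMod p) := by
  obtain ⟨p₀, hp₀⟩ := burgess_vinogradov_nonresidue_general ε hε
  refine ⟨p₀, fun p hp hle q hq hqp ↦ ?_⟩
  obtain ⟨l, hl, hlp, hly⟩ := hp₀ p hp hle q (hq.coprime_iff_not_dvd.not_left.2 hqp)
  exact ⟨l, hl.one_lt.le, hlp, hly⟩
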